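/- Let G be a subgroup of SL(2,ℝ) that is a non-uniform lattice and such that ∞ is a cusp of G. Then the Lagrange spectrum 𝓛(G,∞) contains a Hall ray: there exists L₀ ∈ ℝ such that every extended real L with L₀ ≤ L ≤ +∞ belongs to 𝓛(G,∞); in particular, for every real L ≥ L₀ there exists α ∈ ℝ with L_G(α) = L. -/

import Mathlib

open scoped ENNReal
open MeasureTheory

noncomputable section

/-- `SL(2,ℝ)`. -/
abbrev SL2R := Matrix.SpecialLinearGroup (Fin 2) ℝ

/-- The entry in position (1,1) of a matrix in `SL(2,ℝ)`. -/
def entryA (g : SL2R) : ℝ := g.1 0 0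

/-- The entry in position (1,2) of a matrix in `SL(2,ℝ)`. -/
def entryB (g : SL2R) : ℝ := g.1 0 1

/-- The entry in position (2,1) of a matrix in `SL(2,ℝ)`. -/
def entryC (g : SL2R) : ℝ := g.1 1 0

/-- The entry in position (2,2) of a matrix in `SL(2,ℝ)`. -/
def entryD (g : SL2R) : ℝ := g.1 1 1

/-- The Möbius action of `g ∈ SL(2,ℝ)` on the complex plane (well defined on the
upper half-plane): `z ↦ (az+b)/(cz+d)`. -/
def moeb (g : SL2R) (z : ℂ) : ℂ :=
  ((entryA g : ℂ) * z + (entryB g : ℂ)) / ((entryC g : ℂ) * z + (entryD g : ℂ))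

/-- The upper half-plane `ℍ = {z : 0 < Im z}`, as a subset of `ℂ`. -/
def UHP : Set ℂ := {z : ℂ | 0 < z.im}

/-- Hyperbolic area of a subset of the upper half-plane: `∫∫ dx dy / y²`. -/
def hypArea (s : Set ℂ) : ℝ≥0∞ := ∫⁻ z in s, ENNReal.ofReal (1 / z.im ^ 2)

/-- A subgroup of `SL(2,ℝ)` is discrete if each of its elements is isolated
(in the topology of coefficientwise convergence). -/
def IsDiscreteSubgroup (G : Subgroup SL2R) : Prop :=
  ∀ g ∈ G, ∃ ε > (0 : ℝ), ∀ h ∈ G, (∀ i j, |h.1 i j - g.1 i j| < ε) → h = g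

/-- `F` is a (measurable) fundamental domain for the action of `G` on the upper
half-plane: the `G`-translates of `F` cover `ℍ`, and for every `g ∈ G` acting
nontrivially, `F` and `g·F` overlap in hyperbolic area zero. -/
def IsFundDom (G : Subgroup SL2R) (F : Set ℂ) : Prop :=
  F ⊆ UHP ∧ MeasurableSet F ∧
    (∀ z ∈ UHP, ∃ g ∈ G, moeb g z ∈ F) ∧
    (∀ g ∈ G, (∃ z ∈ UHP, moeb g z ≠ z) → hypArea (F ∩ (moeb g '' F)) = 0)

/-- `G ≤ SL(2,ℝ)` is a non-uniform lattice: it is discrete, it admits a fundamental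
domain of finite hyperbolic area, and the quotient `G\ℍ` is not compact (no compact
subset of `ℍ` meets every orbit). -/
def IsNonUniformLattice (G : Subgroup SL2R) : Prop :=
  IsDiscreteSubgroup G ∧
    (∃ F : Set ℂ, IsFundDom G F ∧ hypArea F < ⊤) ∧
    ¬ ∃ K : Set ℂ, IsCompact K ∧ K ⊆ UHP ∧ ∀ z ∈ UHP, ∃ g ∈ G, moeb g z ∈ K

/-- `∞` is a cusp of `G`: `G` contains a parabolic element `[[1,μ],[0,1]]` with `μ ≠ 0`. -/
def HasCuspAtInfty (G : Subgroup SL2R) : Prop :=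
  ∃ μ : ℝ, μ ≠ 0 ∧ ∃ p : SL2R, p.1 = !![1, μ; 0, 1] ∧ p ∈ G

/-- The set of `k > 0` such that there are infinitely many `g ∈ G`, with pairwise
distinct values `g·∞ = a(g)/c(g) ∈ ℝ`, with `|α − g·∞| < 1/(k c(g)²)`. -/
def LagrangeSet (G : Subgroup SL2R) (α : ℝ) : Set ℝ :=
  {k : ℝ | 0 < k ∧
    {v : ℝ | ∃ g ∈ G, entryC g ≠ 0 ∧ v = entryA g / entryC g ∧
      |α - v| < 1 / (k * entryC g ^ 2)}.Infinite}

/-- The Lagrange value `L_G(α) ∈ [0,∞]` (with the convention `sup ∅ = 0`). -/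
def LagrangeValue (G : Subgroup SL2R) (α : ℝ) : ℝ≥0∞ :=
  sSup (ENNReal.ofReal '' LagrangeSet G α)

/-- The Lagrange spectrum of `G` at `∞`. -/
def LagrangeSpectrum (G : Subgroup SL2R) : Set ℝ≥0∞ :=
  {L : ℝ≥0∞ | ∃ α : ℝ, LagrangeValue G α = L}

/-!
Discreteness and the cusp at `∞` bound the nonzero lower left entries of `G` away from `0`, so the
cusps `g·∞ = a(g)/c(g)` repel each other like fractions do. Finite area makes these cusps dense: a
vertical strip that avoided them would have infinite area near the real axis, yet only finitely
many elements of `G` would return points of the strip to it. Repulsion and density together yield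
pairs of cusps with an almost prescribed difference `t`, both badly approximable by the other cusps.

Multiply the corresponding elements of `G` in a row. The first columns of the partial products
satisfy a three-term recurrence whose coefficients alternate between the prescribed differences and
bounded numbers. If all of them are large, the recurrence has a growing and a decaying solution,
and the cusps of the partial products converge to some `α`, as for a continued fraction. They
approximate `α` with a quality `1 / (c² |α - a/c|)` which is asymptotically the coefficient, whereas
bad approximability of the factors makes the quality of every other cusp bounded. Hence the Lagrange
value of `α` is the limit of the prescribed differences, which can be any large number or `∞`.
-/

/-! ### Matrix entries -/

section Entries

variable (g h : SL2R)

lemma entryA_mul : entryA (g * h) = entryA g * entryA h + entryB g * entryC h := by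
  simp [entryA, entryB, entryC, Matrix.mul_apply]

lemma entryB_mul : entryB (g * h) = entryA g * entryB h + entryB g * entryD h := by
  simp [entryA, entryB, entryD, Matrix.mul_apply]

lemma entryC_mul : entryC (g * h) = entryC g * entryA h + entryD g * entryC h := by
  simp [entryA, entryC, entryD, Matrix.mul_apply]

lemma entryD_mul : entryD (g * h) = entryC g * entryB h + entryD g * entryD h := by
  simp [entryB, entryC, entryD, Matrix.mul_apply]

lemma entryA_inv : entryA g⁻¹ = entryD g := by
  simp [entryA, entryD, Matrix.adjugate_fin_two]

lemma entryB_inv : entryB g⁻¹ = -entryB g := by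
  simp [entryB, Matrix.adjugate_fin_two]

lemma entryC_inv : entryC g⁻¹ = -entryC g := by
  simp [entryC, Matrix.adjugate_fin_two]

lemma entryD_inv : entryD g⁻¹ = entryA g := by
  simp [entryA, entryD, Matrix.adjugate_fin_two]

lemma entryA_one : entryA 1 = 1 := by simp [entryA]

lemma entryC_one : entryC 1 = 0 := by simp [entryC]

lemma entryA_mul_entryD_sub : entryA g * entryD g - entryB g * entryC g = 1 := by
  have hdet := g.2
  rwa [Matrix.det_fin_two] at hdet

lemma entryC_inv_mul : entryC (g⁻¹ * h) = entryA g * entryC h - entryC g * entryA h := by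
  rw [entryC_mul, entryC_inv, entryD_inv]
  ring

lemma entryA_mul_entryD_of_entryC_eq_zero {g : SL2R} (hc : entryC g = 0) :
    entryA g * entryD g = 1 := by
  simpa [hc] using entryA_mul_entryD_sub g

lemma entryA_ne_zero_of_entryC_eq_zero {g : SL2R} (hc : entryC g = 0) : entryA g ≠ 0 :=
  left_ne_zero_of_mul_eq_one (entryA_mul_entryD_of_entryC_eq_zero hc)

end Entries

/-! ### Discrete subgroups -/

namespace IsDiscreteSubgroup

variable {G : Subgroup SL2R}

lemma discreteTopology (hG : IsDiscreteSubgroup G) : DiscreteTopology G := by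
  refine discreteTopology_iff_isOpen_singleton.2 fun g ↦ ?_
  obtain ⟨ε, hε, hisolated⟩ := hG g g.2
  have hball : {g} = ⋂ i, ⋂ j, {h : G | |h.1.1 i j - g.1.1 i j| < ε} := by
    ext h
    simp only [Set.mem_singleton_iff, Set.mem_iInter, Set.mem_ofPred_eq]
    exact ⟨fun hh ↦ by simp [hh, hε], fun hh ↦ Subtype.ext (hisolated h h.2 hh)⟩
  rw [hball]
  refine isOpen_iInter_of_finite fun i ↦ isOpen_iInter_of_finite fun j ↦ isOpen_lt ?_ ?_
  · fun_prop
  · exact continuous_const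

lemma finite_setOf_entry_le (hG : IsDiscreteSubgroup G) (C : ℝ) :
    {g | g ∈ G ∧ |entryA g| ≤ C ∧ |entryB g| ≤ C ∧ |entryC g| ≤ C ∧ |entryD g| ≤ C}.Finite := by
  have := hG.discreteTopology
  let box : Set (Matrix (Fin 2) (Fin 2) ℝ) :=
    Set.univ.pi fun _ ↦ Set.univ.pi fun _ ↦ Set.Icc (-C) C
  have hbox : IsCompact box := isCompact_univ_pi fun _ ↦ isCompact_univ_pi fun _ ↦ isCompact_Icc
  have hclosed : Topology.IsClosedEmbedding (Subtype.val : SL2R → Matrix (Fin 2) (Fin 2) ℝ) :=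
    (isClosed_singleton.preimage (by fun_prop : Continuous Matrix.det)).isClosedEmbedding_subtypeVal
  have hcompact : IsCompact ((G : Set SL2R) ∩ Subtype.val ⁻¹' box) :=
    (hclosed.isCompact_preimage hbox).inter_left G.isClosed_of_discrete
  refine (hcompact.finite ?_).subset ?_
  · exact IsDiscrete.mono ⟨inferInstanceAs (DiscreteTopology G)⟩ Set.inter_subset_left
  · rintro g ⟨hg, ha, hb, hc, hd⟩
    refine ⟨hg, fun i _ j _ ↦ abs_le.1 ?_⟩
    fin_cases i <;> fin_cases j <;> assumption

lemma countable (hG : IsDiscreteSubgroup G) : Countable G := by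
  refine Set.Countable.mono (fun g hg ↦ ?_)
    (Set.countable_iUnion fun n : ℕ ↦ (hG.finite_setOf_entry_le n).countable)
  obtain ⟨n, hn⟩ := exists_nat_ge (max (max |entryA g| |entryB g|) (max |entryC g| |entryD g|))
  simp only [max_le_iff] at hn
  exact Set.mem_iUnion.2 ⟨n, hg, hn.1.1, hn.1.2, hn.2.1, hn.2.2⟩

end IsDiscreteSubgroup

/-! ### Translations and the cusp at infinity -/

lemma ext_entries {g h : SL2R} (ha : entryA g = entryA h) (hb : entryB g = entryB h)
    (hc : entryC g = entryC h) (hd : entryD g = entryD h) : g = h := by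
  ext i j
  fin_cases i <;> fin_cases j <;> assumption

/-- The one-parameter group of matrices `[[1, x], [0, 1]]`, acting on `ℍ` as the translations
`z ↦ z + x`. -/
def unipotent : AddChar ℝ SL2R where
  toFun x := ⟨!![1, x; 0, 1], by simp⟩
  map_zero_eq_one' := by apply ext_entries <;> simp [entryA, entryB, entryC, entryD]
  map_add_eq_mul' x y := Subtype.ext <| by
    change !![1, x + y; 0, 1] = !![1, x; 0, 1] * !![1, y; 0, 1]
    simp [add_comm]

@[simp] lemma entryA_unipotent (x : ℝ) : entryA (unipotent x) = 1 := rfl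

@[simp] lemma entryB_unipotent (x : ℝ) : entryB (unipotent x) = x := rfl

@[simp] lemma entryC_unipotent (x : ℝ) : entryC (unipotent x) = 0 := rfl

@[simp] lemma entryD_unipotent (x : ℝ) : entryD (unipotent x) = 1 := rfl

lemma unipotent_injective : Function.Injective unipotent := fun x y h ↦ by
  rw [← entryB_unipotent x, h, entryB_unipotent]

lemma unipotent_intCast_mul_mem {G : Subgroup SL2R} {μ : ℝ} (hμ : unipotent μ ∈ G) (k : ℤ) :
    unipotent (k * μ) ∈ G :=
  zsmul_eq_mul μ k ▸ unipotent.map_zsmul_eq_zpow k μ ▸ G.zpow_mem hμ k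

lemma HasCuspAtInfty.exists_unipotent_mem {G : Subgroup SL2R} (hcusp : HasCuspAtInfty G) :
    ∃ μ > 0, unipotent μ ∈ G := by
  obtain ⟨μ, hμ, p, hp, hpG⟩ := hcusp
  obtain rfl : p = unipotent μ := Subtype.ext hp
  rcases hμ.lt_or_gt with hneg | hpos
  · exact ⟨-μ, neg_pos.2 hneg, unipotent.map_neg_eq_inv μ ▸ G.inv_mem hpG⟩
  · exact ⟨μ, hpos, hpG⟩

lemma conj_unipotent_of_entryC_eq_zero {g : SL2R} (hc : entryC g = 0) (x : ℝ) :
    g * unipotent x * g⁻¹ = unipotent (entryA g ^ 2 * x) := by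
  have had := entryA_mul_entryD_of_entryC_eq_zero hc
  apply ext_entries <;>
    simp only [entryA_mul, entryB_mul, entryC_mul, entryD_mul, entryA_inv, entryB_inv, entryC_inv,
      entryD_inv, entryA_unipotent, entryB_unipotent, entryC_unipotent, entryD_unipotent, hc]
  · linear_combination had
  · ring
  · ring
  · linear_combination had

section Translation

variable (x y : ℝ) (g : SL2R)

lemma entryA_unipotent_mul_mul_unipotent :
    entryA (unipotent x * g * unipotent y) = entryA g + x * entryC g := by
  simp [entryA_mul, entryB_mul]

lemma entryC_unipotent_mul_mul_unipotent :
    entryC (unipotent x * g * unipotent y) = entryC g := by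
  simp [entryC_mul, entryD_mul]

lemma entryD_unipotent_mul_mul_unipotent :
    entryD (unipotent x * g * unipotent y) = entryD g + y * entryC g := by
  simp only [entryC_mul, entryD_mul, entryB_unipotent, entryC_unipotent, entryD_unipotent]
  ring

end Translation

lemma exists_int_abs_add_mul_sub_le {d : ℝ} (hd : d ≠ 0) (x y : ℝ) :
    ∃ k : ℤ, |x + k * d - y| ≤ |d| := by
  refine ⟨round ((y - x) / d), ?_⟩
  have hround := abs_sub_round ((y - x) / d)
  have hsplit : x + round ((y - x) / d) * d - y = -(((y - x) / d - round ((y - x) / d)) * d) := by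
    field_simp
    ring
  rw [hsplit, abs_neg, abs_mul]
  nlinarith [abs_nonneg d]

lemma abs_entryB_le_of_near_one {g : SL2R} {μ : ℝ} (hc : entryC g ≠ 0)
    (ha : |entryA g - 1| ≤ μ * |entryC g|) (hd : |entryD g - 1| ≤ μ * |entryC g|)
    (hd' : |entryD g| ≤ 1 + μ) : |entryB g| ≤ μ * (2 + μ) := by
  refine le_of_mul_le_mul_right ?_ (abs_pos.2 hc)
  have hμ : 0 ≤ μ * |entryC g| := (abs_nonneg _).trans ha
  have hbc : entryB g * entryC g = (entryA g - 1) * entryD g + (entryD g - 1) := by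
    linear_combination -entryA_mul_entryD_sub g
  calc |entryB g| * |entryC g|
      ≤ |entryA g - 1| * |entryD g| + |entryD g - 1| := by
        rw [← abs_mul, hbc, ← abs_mul]
        exact abs_add_le _ _
    _ ≤ μ * |entryC g| * (1 + μ) + μ * |entryC g| := by gcongr
    _ = μ * (2 + μ) * |entryC g| := by ring

lemma exists_bounded_representative {G : Subgroup SL2R} {μ : ℝ} (hμ : 0 < μ) (hμG : unipotent μ ∈ G)
    {g : SL2R} (hg : g ∈ G) (hc : entryC g ≠ 0) (hc1 : |entryC g| ≤ 1) :
    ∃ h ∈ G, entryC h = entryC g ∧ |entryA h| ≤ 1 + μ ∧ |entryD h| ≤ 1 + μ ∧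
      |entryB h| ≤ μ * (2 + μ) := by
  have hμc : μ * entryC g ≠ 0 := mul_ne_zero hμ.ne' hc
  obtain ⟨k, hk⟩ := exists_int_abs_add_mul_sub_le hμc (entryA g) 1
  obtain ⟨l, hl⟩ := exists_int_abs_add_mul_sub_le hμc (entryD g) 1
  let h := unipotent (k * μ) * g * unipotent (l * μ)
  have hhC : entryC h = entryC g := entryC_unipotent_mul_mul_unipotent _ _ g
  rw [← mul_assoc, ← entryA_unipotent_mul_mul_unipotent _ (l * μ), abs_mul, abs_of_pos hμ,
    ← hhC] at hk
  rw [← mul_assoc, ← entryD_unipotent_mul_mul_unipotent (k * μ), abs_mul, abs_of_pos hμ,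
    ← hhC] at hl
  have hμC : μ * |entryC h| ≤ μ := mul_le_of_le_one_right hμ.le (hhC ▸ hc1)
  have bound {x : ℝ} (hx : |x - 1| ≤ μ * |entryC h|) : |x| ≤ 1 + μ := by
    simp only [abs_le] at hx ⊢
    constructor <;> linarith
  exact ⟨h, G.mul_mem (G.mul_mem (unipotent_intCast_mul_mem hμG k) hg)
    (unipotent_intCast_mul_mem hμG l), hhC, bound hk, bound hl,
    abs_entryB_le_of_near_one (hhC ▸ hc) hk hl (bound hl)⟩

namespace IsDiscreteSubgroup

variable {G : Subgroup SL2R}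

/-- Shimizu's lemma without the explicit constant. -/
lemma exists_le_abs_entryC (hG : IsDiscreteSubgroup G) (hcusp : HasCuspAtInfty G) :
    ∃ c₀ > 0, ∀ g ∈ G, entryC g ≠ 0 → c₀ ≤ |entryC g| := by
  obtain ⟨μ, hμ, hμG⟩ := hcusp.exists_unipotent_mem
  have hfin := (hG.finite_setOf_entry_le (1 + μ * (2 + μ))).image fun g ↦ |entryC g|
  have hnhds := (hfin.subset Set.sdiff_subset).isClosed.compl_mem_nhds
    (show (0 : ℝ) ∉ _ \ {0} by simp)
  obtain ⟨ε, hε, hball⟩ := Metric.mem_nhds_iff.1 hnhds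
  refine ⟨min ε 1, lt_min hε one_pos, fun g hg hc ↦ ?_⟩
  by_contra! hlt
  obtain ⟨hltε, hlt1⟩ := lt_min_iff.1 hlt
  obtain ⟨h, hh, hhC, ha, hd, hb⟩ := exists_bounded_representative hμ hμG hg hc hlt1.le
  refine hball (a := |entryC g|) (by simpa using hltε) ⟨⟨h, ⟨hh, ?_, ?_, ?_, ?_⟩, ?_⟩, ?_⟩
  · nlinarith
  · linarith
  · rw [hhC]
    nlinarith
  · nlinarith
  · simp only [hhC]
  · simpa using hc

lemma one_le_abs_entryA (hG : IsDiscreteSubgroup G) (hcusp : HasCuspAtInfty G) {g : SL2R}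
    (hg : g ∈ G) (hc : entryC g = 0) : 1 ≤ |entryA g| := by
  by_contra! habs
  have hlt : entryA g ^ 2 < 1 := (sq_lt_one_iff_abs_lt_one _).2 habs
  obtain ⟨μ, hμ, hμG⟩ := hcusp.exists_unipotent_mem
  have hpos : 0 < entryA g ^ 2 := by
    have := entryA_ne_zero_of_entryC_eq_zero hc
    positivity
  have hconj (n : ℕ) : unipotent ((entryA g ^ 2) ^ n * μ) ∈ G := by
    induction n with
    | zero => simpa using hμG
    | succ n ih =>
      rw [pow_succ', mul_assoc, ← conj_unipotent_of_entryC_eq_zero hc]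
      exact G.mul_mem (G.mul_mem hg ih) (G.inv_mem hg)
  have hinj : Function.Injective fun n : ℕ ↦ unipotent ((entryA g ^ 2) ^ n * μ) :=
    unipotent_injective.comp
      ((mul_left_injective₀ hμ.ne').comp (pow_right_injective₀ hpos hlt.ne))
  refine Set.infinite_of_injective_forall_mem hinj (fun n ↦ ?_)
    (hG.finite_setOf_entry_le (1 + μ))
  have hle : (entryA g ^ 2) ^ n * μ ≤ μ :=
    mul_le_of_le_one_left hμ.le (pow_le_one₀ hpos.le hlt.le)
  have hmul : |(entryA g ^ 2) ^ n * μ| = (entryA g ^ 2) ^ n * μ := abs_of_nonneg (by positivity)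
  refine ⟨hconj n, ?_, ?_, ?_, ?_⟩ <;> simp only [entryA_unipotent, entryB_unipotent,
    entryC_unipotent, entryD_unipotent, abs_one, abs_zero, hmul] <;> linarith

lemma abs_entryA_eq_one (hG : IsDiscreteSubgroup G) (hcusp : HasCuspAtInfty G) {g : SL2R}
    (hg : g ∈ G) (hc : entryC g = 0) : |entryA g| = 1 := by
  have ha := hG.one_le_abs_entryA hcusp hg hc
  have hd := hG.one_le_abs_entryA hcusp (G.inv_mem hg) (by rw [entryC_inv, hc, neg_zero])
  have had : |entryA g| * |entryA g⁻¹| = 1 := by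
    rw [← abs_mul, entryA_inv, entryA_mul_entryD_of_entryC_eq_zero hc, abs_one]
  nlinarith

end IsDiscreteSubgroup

/-! ### Density of the cusp orbit of a lattice -/

/-- The orbit `G · ∞` of the cusp at infinity, without the point `∞` itself. -/
def cuspOrbit (G : Subgroup SL2R) : Set ℝ :=
  {v | ∃ g ∈ G, entryC g ≠ 0 ∧ v = entryA g / entryC g}

section DoubleCounting

variable {Γ X : Type*} [Group Γ] [MulAction Γ X] {W : Set X}

lemma encard_setOf_inv_smul_mem_le (z : X) :
    {g : Γ | g⁻¹ • z ∈ W}.encard ≤ {g : Γ | ∃ w ∈ W, g • w ∈ W}.encard := by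
  rcases Set.eq_empty_or_nonempty {g : Γ | g⁻¹ • z ∈ W} with hempty | ⟨g₀, hg₀⟩
  · simp [hempty]
  · refine Set.encard_le_encard_of_injOn (f := fun g ↦ g⁻¹ * g₀) (fun g hg ↦ ?_) (by simp)
    exact ⟨g₀⁻¹ • z, hg₀, by rwa [mul_smul, smul_inv_smul]⟩

lemma measure_le_encard_mul_measure [Countable Γ] [MeasurableSpace X] [MeasurableConstSMul Γ X]
    {μ : Measure X} [SMulInvariantMeasure Γ X μ] {F : Set X} (hW : MeasurableSet W)
    (hF : ∀ z ∈ W, ∃ g : Γ, g • z ∈ F) :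
    μ W ≤ {g : Γ | ∃ w ∈ W, g • w ∈ W}.encard * μ F := by
  have hWg (g : Γ) : MeasurableSet ((g⁻¹ • ·) ⁻¹' W) := measurable_const_smul g⁻¹ hW
  have hcover : W ⊆ ⋃ g : Γ, (g • ·) ⁻¹' ((g⁻¹ • ·) ⁻¹' W ∩ F) := fun z hz ↦ by
    obtain ⟨g, hg⟩ := hF z hz
    exact Set.mem_iUnion.2 ⟨g, by simpa using hz, hg⟩
  calc μ W
      ≤ ∑' g : Γ, μ ((g • ·) ⁻¹' ((g⁻¹ • ·) ⁻¹' W ∩ F)) :=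
        (measure_mono hcover).trans (measure_iUnion_le _)
    _ = ∑' g : Γ, ∫⁻ z in F, ((g⁻¹ • ·) ⁻¹' W).indicator 1 z ∂μ := by
        congr 1 with g
        rw [measure_preimage_smul, lintegral_indicator_one (hWg g),
          Measure.restrict_apply (hWg g)]
    _ = ∫⁻ z in F, ∑' g : Γ, ((g⁻¹ • ·) ⁻¹' W).indicator 1 z ∂μ :=
        (lintegral_tsum fun g ↦ (measurable_one.indicator (hWg g)).aemeasurable).symm
    _ ≤ ∫⁻ _ in F, {g : Γ | ∃ w ∈ W, g • w ∈ W}.encard ∂μ := by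
        refine lintegral_mono fun z ↦ le_of_eq_of_le ?_
          (ENat.toENNReal_le.2 (encard_setOf_inv_smul_mem_le (Γ := Γ) z))
        exact (tsum_subtype {g : Γ | g⁻¹ • z ∈ W} 1).symm.trans (ENNReal.tsum_set_one _)
    _ = {g : Γ | ∃ w ∈ W, g • w ∈ W}.encard * μ F := setLIntegral_const _ _

end DoubleCounting

lemma coe_smul_eq_moeb (g : SL2R) (z : UpperHalfPlane) :
    ((g • z : UpperHalfPlane) : ℂ) = moeb g z := by
  rw [UpperHalfPlane.coe_specialLinearGroup_apply]
  simp [moeb, entryA, entryB, entryC, entryD]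

lemma volume_preimage_coe_eq_hypArea {F : Set ℂ} (hF : F ⊆ UHP) :
    volume (UpperHalfPlane.coe ⁻¹' F) = hypArea F := by
  have hrange : F ⊆ Set.range UpperHalfPlane.coe := fun z hz ↦ ⟨⟨z, hF hz⟩, rfl⟩
  rw [UpperHalfPlane.volume_eq_lintegral, hypArea, Set.image_preimage_eq_of_subset hrange]
  refine lintegral_congr fun z ↦ ?_
  rw [ENNReal.ofReal, ENNReal.coe_inj]
  ext
  simp [sq_nonneg]

instance : SMulInvariantMeasure SL2R UpperHalfPlane volume where
  measure_preimage_smul g s _ := measure_preimage_smul volume (g : GL (Fin 2) ℝ) s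

/-- The part below height `1` of the vertical strip of half-width `η` over `x`. -/
def halfStrip (x η : ℝ) : Set UpperHalfPlane := {z | |z.re - x| ≤ η ∧ z.im < 1}

lemma measurableSet_halfStrip (x η : ℝ) : MeasurableSet (halfStrip x η) :=
  (measurableSet_le (UpperHalfPlane.continuous_re.sub continuous_const).abs.measurable
    measurable_const).inter (measurableSet_lt UpperHalfPlane.continuous_im.measurable
    measurable_const)

lemma ofReal_div_le_volume_halfStrip {x η δ : ℝ} (hη : 0 < η) (hδ : 0 < δ) (hδ1 : δ < 1) :
    ENNReal.ofReal (η / δ) ≤ volume (halfStrip x η) := by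
  let R : Set ℂ := Set.Icc (x - η) (x + η) ×ℂ Set.Icc (δ / 2) δ
  have him {z : ℂ} (hz : z ∈ R) : 0 < z.im := (half_pos hδ).trans_le hz.2.1
  have hR : MeasurableSet R :=
    (measurableSet_Icc.preimage Complex.measurable_re).inter
      (measurableSet_Icc.preimage Complex.measurable_im)
  have hvol : volume R = ENNReal.ofReal (2 * η) * ENNReal.ofReal (δ / 2) := by
    have hpre : R = Complex.measurableEquivRealProd ⁻¹'
        (Set.Icc (x - η) (x + η) ×ˢ Set.Icc (δ / 2) δ) := rfl
    rw [hpre, Complex.volume_preserving_equiv_real_prod.measure_preimage_equiv,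
      Measure.volume_eq_prod, Measure.prod_prod, Real.volume_Icc, Real.volume_Icc]
    congr 2 <;> ring
  calc ENNReal.ofReal (η / δ) = ENNReal.ofReal (1 / δ ^ 2) * volume R := by
        rw [hvol, ← ENNReal.ofReal_mul (by positivity), ← ENNReal.ofReal_mul (by positivity)]
        congr 1
        field_simp
    _ = ∫⁻ _ in R, ENNReal.ofReal (1 / δ ^ 2) := (setLIntegral_const _ _).symm
    _ ≤ hypArea R := by
        refine setLIntegral_mono' hR fun z hz ↦ ENNReal.ofReal_le_ofReal ?_
        have := him hz
        have := hz.2.2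
        gcongr
    _ = volume (UpperHalfPlane.coe ⁻¹' R) := (volume_preimage_coe_eq_hypArea fun _ ↦ him).symm
    _ ≤ volume (halfStrip x η) := by
        refine measure_mono fun z hz ↦ ⟨abs_sub_le_iff.2 ⟨?_, ?_⟩, hz.2.2.trans_lt hδ1⟩
        · linarith [hz.1.2, UpperHalfPlane.coe_re z]
        · linarith [hz.1.1, UpperHalfPlane.coe_re z]

lemma volume_halfStrip (x : ℝ) {η : ℝ} (hη : 0 < η) : volume (halfStrip x η) = ⊤ := by
  have hlim : Filter.Tendsto (fun δ ↦ ENNReal.ofReal (η / δ)) (nhdsWithin 0 (Set.Ioi 0)) (nhds ⊤) :=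
    ENNReal.tendsto_ofReal_nhds_top.2 (tendsto_inv_nhdsGT_zero.const_mul_atTop hη)
  refine top_le_iff.1 (le_of_tendsto hlim ?_)
  filter_upwards [Ioo_mem_nhdsGT one_pos] with δ hδ
  exact ofReal_div_le_volume_halfStrip hη hδ.1 hδ.2

lemma norm_entryC_mul_smul_sub_mul_norm_denom (g : SL2R) (z : UpperHalfPlane) :
    ‖entryC g * ((g • z : UpperHalfPlane) : ℂ) - entryA g‖ *
      ‖(entryC g * z + entryD g : ℂ)‖ = 1 := by
  have hdenom : (entryC g : ℂ) * z + entryD g ≠ 0 := by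
    simpa [UpperHalfPlane.denom, entryC, entryD] using
      UpperHalfPlane.denom_ne_zero (g : GL (Fin 2) ℝ) z
  have hdet : (entryA g : ℂ) * entryD g - entryB g * entryC g = 1 := by
    exact_mod_cast entryA_mul_entryD_sub g
  have hprod : (entryC g * ((g • z : UpperHalfPlane) : ℂ) - entryA g) * (entryC g * z + entryD g)
      = -1 := by
    rw [coe_smul_eq_moeb, moeb]
    field_simp
    linear_combination -hdet
  rw [← norm_mul, hprod, norm_neg, norm_one]

lemma abs_mul_le_norm_mul_sub_of_far {a c x η : ℝ} {w : ℂ} (hc : c ≠ 0)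
    (hfar : 2 * η ≤ |a / c - x|) (hw : |w.re - x| ≤ η) : |c| * η ≤ ‖(c * w - a : ℂ)‖ := by
  have hre : c * w.re - a = c * (w.re - a / c) := by field_simp
  calc |c| * η ≤ |c| * |w.re - a / c| := by
        gcongr
        linarith [abs_sub_le (a / c) w.re x, abs_sub_comm (a / c) w.re]
    _ = |(c * w - a : ℂ).re| := by simp [← abs_mul, ← hre]
    _ ≤ ‖(c * w - a : ℂ)‖ := Complex.abs_re_le_norm _

lemma abs_le_abs_mul_add_norm_mul_sub {a c x η : ℝ} {w : ℂ} (hw : |w.re - x| ≤ η) :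
    |a| ≤ |c| * (|x| + η) + ‖(c * w - a : ℂ)‖ := by
  have hsplit : a = c * w.re - (c * w - a : ℂ).re := by simp
  have hwre : |w.re| ≤ |x| + η := by linarith [abs_sub_abs_le_abs_sub w.re x]
  calc |a| ≤ |c * w.re| + |(c * w - a : ℂ).re| := by
        conv_lhs => rw [hsplit]
        exact abs_sub _ _
    _ ≤ |c| * (|x| + η) + ‖(c * w - a : ℂ)‖ := by
        rw [abs_mul]
        gcongr
        exact Complex.abs_re_le_norm _

lemma abs_entries_le_of_far {x η c₀ : ℝ} (hη : 0 < η) (hc₀ : 0 < c₀) {g : SL2R}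
    (hc : c₀ ≤ |entryC g|) (ha : 2 * η ≤ |entryA g / entryC g - x|)
    (hd : 2 * η ≤ |-entryD g / entryC g - x|) {z : UpperHalfPlane} (hz : |z.re - x| ≤ η)
    (hgz : |(g • z).re - x| ≤ η) :
    |entryC g| ≤ 1 / η ∧ |entryA g| ≤ 1 / η * (|x| + η) + 1 / (c₀ * η) ∧
      |entryD g| ≤ 1 / η * (|x| + η) + 1 / (c₀ * η) := by
  have hc' : entryC g ≠ 0 := abs_pos.1 (hc₀.trans_le hc)
  have hA := abs_mul_le_norm_mul_sub_of_far (w := (g • z : UpperHalfPlane)) hc' ha hgz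
  have hD := abs_mul_le_norm_mul_sub_of_far (w := z) hc' hd hz
  have hprod := norm_entryC_mul_smul_sub_mul_norm_denom g z
  rw [← sub_neg_eq_add, ← Complex.ofReal_neg] at hprod
  have hA' := abs_le_abs_mul_add_norm_mul_sub (a := entryA g) (c := entryC g)
    (w := (g • z : UpperHalfPlane)) hgz
  have hD' := abs_le_abs_mul_add_norm_mul_sub (a := -entryD g) (c := entryC g) (w := z) hz
  set X := ‖(entryC g * ((g • z : UpperHalfPlane) : ℂ) - entryA g : ℂ)‖
  set Y := ‖(entryC g * z - (-entryD g : ℝ) : ℂ)‖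
  have hcη : c₀ * η ≤ |entryC g| * η := by gcongr
  have hcη₀ : 0 < c₀ * η := by positivity
  have hC : |entryC g| ≤ 1 / η := by
    rw [le_div_iff₀ hη]
    nlinarith
  have hX : X ≤ 1 / (c₀ * η) := by
    rw [le_div_iff₀ hcη₀, ← hprod]
    gcongr
    exact hcη.trans hD
  have hY : Y ≤ 1 / (c₀ * η) := by
    rw [le_div_iff₀ hcη₀, ← hprod, mul_comm X]
    gcongr
    exact hcη.trans hA
  refine ⟨hC, hA'.trans ?_, (abs_neg (entryD g) ▸ hD').trans ?_⟩ <;> gcongr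

lemma abs_entryB_le {c₀ K : ℝ} (hc₀ : 0 < c₀) {g : SL2R} (hc : c₀ ≤ |entryC g|)
    (ha : |entryA g| ≤ K) (hd : |entryD g| ≤ K) : |entryB g| ≤ (K * K + 1) / c₀ := by
  rw [le_div_iff₀ hc₀]
  calc |entryB g| * c₀ ≤ |entryB g| * |entryC g| := by gcongr
    _ = |entryA g * entryD g - 1| := by
        rw [← abs_mul]
        congr 1
        linear_combination -entryA_mul_entryD_sub g
    _ ≤ |entryA g| * |entryD g| + 1 := by simpa [abs_mul] using abs_sub (entryA g * entryD g) 1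
    _ ≤ K * K + 1 := by
        have := (abs_nonneg _).trans ha
        gcongr

lemma abs_entryB_le_of_entryC_eq_zero {x η : ℝ} {g : SL2R} (hc : entryC g = 0)
    (ha : |entryA g| = 1) {z : UpperHalfPlane} (hz : |z.re - x| ≤ η)
    (hgz : |(g • z).re - x| ≤ η) : |entryB g| ≤ 2 * η := by
  have had := entryA_mul_entryD_of_entryC_eq_zero hc
  have hcoe : ((g • z : UpperHalfPlane) : ℂ) = z + (entryA g * entryB g : ℝ) := by
    have hsq : entryA g ^ 2 = 1 := by rw [← sq_abs, ha, one_pow]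
    have hd : entryD g = entryA g := by linear_combination entryA g * had - entryD g * hsq
    have ha0 : (entryA g : ℂ) ≠ 0 := by exact_mod_cast entryA_ne_zero_of_entryC_eq_zero hc
    have hsq' : (entryA g : ℂ) ^ 2 = 1 := by exact_mod_cast hsq
    rw [coe_smul_eq_moeb, moeb, hc, hd, Complex.ofReal_zero, zero_mul, zero_add, div_eq_iff ha0]
    push_cast
    linear_combination -(entryB g : ℂ) * hsq'
  have hre : (g • z).re = z.re + entryA g * entryB g := by
    simpa using congrArg Complex.re hcoe
  calc |entryB g| = |((g • z).re - x) - (z.re - x)| := by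
        rw [hre, show z.re + entryA g * entryB g - x - (z.re - x) = entryA g * entryB g by ring,
          abs_mul, ha, one_mul]
    _ ≤ 2 * η := by linarith [abs_sub ((g • z).re - x) (z.re - x)]

namespace IsDiscreteSubgroup

variable {G : Subgroup SL2R}

lemma finite_returns_halfStrip (hG : IsDiscreteSubgroup G) (hcusp : HasCuspAtInfty G) {x η : ℝ}
    (hη : 0 < η) (hfar : ∀ v ∈ cuspOrbit G, 2 * η ≤ |v - x|) :
    {g : G | ∃ z ∈ halfStrip x η, g • z ∈ halfStrip x η}.Finite := by
  obtain ⟨c₀, hc₀, hC⟩ := hG.exists_le_abs_entryC hcusp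
  let K := 1 / η * (|x| + η) + 1 / (c₀ * η)
  have hK : 0 < K := by positivity
  have hη' : 0 < 1 / η := by positivity
  have hB : 0 < (K * K + 1) / c₀ := by positivity
  refine ((hG.finite_setOf_entry_le (K + 1 / η + (K * K + 1) / c₀ + 2 * η + 1)).preimage
    Subtype.val_injective.injOn).subset ?_
  rintro ⟨g, hg⟩ ⟨z, ⟨hz, -⟩, hgz, -⟩
  change |(g • z).re - x| ≤ η at hgz
  by_cases hc : entryC g = 0
  · have ha : |entryA g| = 1 := hG.abs_entryA_eq_one hcusp hg hc
    have hd : |entryD g| = 1 := by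
      simpa [abs_mul, ha] using congrArg abs (entryA_mul_entryD_of_entryC_eq_zero hc)
    have hb := abs_entryB_le_of_entryC_eq_zero hc ha hz hgz
    refine ⟨hg, ?_, ?_, ?_, ?_⟩ <;> simp only [hc, ha, hd, abs_zero] <;> linarith
  · have ha := hfar _ ⟨g, hg, hc, rfl⟩
    have hd := hfar _ ⟨g⁻¹, G.inv_mem hg, by simpa [entryC_inv] using hc, rfl⟩
    rw [entryA_inv, entryC_inv, div_neg, ← neg_div] at hd
    obtain ⟨hc', ha', hd'⟩ := abs_entries_le_of_far hη hc₀ (hC g hg hc) ha hd hz hgz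
    have hb := abs_entryB_le hc₀ (hC g hg hc) ha' hd'
    refine ⟨hg, ?_, ?_, ?_, ?_⟩ <;> linarith

lemma dense_cuspOrbit (hG : IsDiscreteSubgroup G) (hcusp : HasCuspAtInfty G) {F : Set ℂ}
    (hFU : F ⊆ UHP) (hFcover : ∀ z ∈ UHP, ∃ g ∈ G, moeb g z ∈ F) (hFarea : hypArea F ≠ ⊤) :
    Dense (cuspOrbit G) := by
  refine Metric.dense_iff.2 fun x r hr ↦ ?_
  by_contra hempty
  have hfar (v : ℝ) (hv : v ∈ cuspOrbit G) : 2 * (r / 2) ≤ |v - x| := by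
    rw [mul_div_cancel₀ r two_ne_zero]
    by_contra! hlt
    exact hempty ⟨v, by simpa [Real.dist_eq] using hlt, hv⟩
  have := hG.countable
  have hcount := measure_le_encard_mul_measure (Γ := G) (μ := volume)
    (F := UpperHalfPlane.coe ⁻¹' F) (measurableSet_halfStrip x (r / 2)) fun z _ ↦ by
      obtain ⟨g, hg, hgz⟩ := hFcover z z.im_pos
      exact ⟨⟨g, hg⟩, by rwa [Set.mem_preimage, Subgroup.mk_smul, coe_smul_eq_moeb]⟩
  rw [volume_halfStrip x (half_pos hr), volume_preimage_coe_eq_hypArea hFU, top_le_iff] at hcount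
  refine ENNReal.mul_ne_top ?_ hFarea hcount
  simpa using hG.finite_returns_halfStrip hcusp (half_pos hr) hfar

end IsDiscreteSubgroup

lemma IsNonUniformLattice.dense_cuspOrbit {G : Subgroup SL2R} (hG : IsNonUniformLattice G)
    (hcusp : HasCuspAtInfty G) : Dense (cuspOrbit G) :=
  let ⟨hdisc, ⟨_, ⟨hFU, _, hFcover, _⟩, hFarea⟩, _⟩ := hG
  hdisc.dense_cuspOrbit hcusp hFU hFcover hFarea.ne

/-! ### Separated families and badly approximable members -/

lemma exists_forall_half_le {ι : Type*} {c : ι → ℝ} {A : Set ι} (hA : A.Nonempty) {R : ℝ}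
    (hR : 0 < R) (hRA : ∀ i ∈ A, R ≤ c i) : ∃ i ∈ A, ∀ j ∈ A, c i / 2 ≤ c j := by
  have hlb : R ∈ lowerBounds (c '' A) := Set.forall_mem_image.2 hRA
  have hpos : 0 < sInf (c '' A) := hR.trans_le (le_csInf (hA.image c) hlb)
  obtain ⟨_, ⟨i, hi, rfl⟩, hlt⟩ := exists_lt_of_csInf_lt (hA.image c)
    (show sInf (c '' A) < 2 * sInf (c '' A) by linarith)
  refine ⟨i, hi, fun j hj ↦ ?_⟩
  linarith [csInf_le ⟨R, hlb⟩ (Set.mem_image_of_mem c hj)]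

lemma exists_four_pow_large {c₀ : ℝ} (hc₀ : 0 < c₀) (R : ℝ) {ε : ℝ} (hε : 0 < ε) :
    ∃ n : ℕ, R ≤ 4 ^ n * c₀ ∧ c₀ / 32 / (4 ^ n * c₀) ^ 2 ≤ ε := by
  have hgrow : Filter.Tendsto (fun n : ℕ ↦ (4 : ℝ) ^ n * c₀) Filter.atTop Filter.atTop :=
    (tendsto_pow_atTop_atTop_of_one_lt (by norm_num)).atTop_mul_const hc₀
  have hsmall : Filter.Tendsto (fun n : ℕ ↦ c₀ / 32 / ((4 : ℝ) ^ n * c₀) ^ 2) Filter.atTop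
      (nhds 0) :=
    ((Filter.tendsto_pow_atTop two_ne_zero).comp hgrow).const_div_atTop _
  exact ((hgrow.eventually_ge_atTop R).and (hsmall.eventually_le_const hε)).exists

/-- The points `v i` with weights `c i ≥ c₀` repel each other like the cusps of a Fuchsian group,
or like the fractions `a / c` with denominator `c`. -/
structure IsSeparatedFamily {ι : Type*} (v c : ι → ℝ) (c₀ : ℝ) : Prop where
  pos : 0 < c₀
  le_weight : ∀ i, c₀ ≤ c i
  sep : ∀ i j, v i ≠ v j → c₀ / (c i * c j) ≤ |v i - v j|

namespace IsSeparatedFamily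

variable {ι : Type*} {v c : ι → ℝ} {c₀ : ℝ}

lemma weight_pos (hv : IsSeparatedFamily v c c₀) (i : ι) : 0 < c i :=
  hv.pos.trans_le (hv.le_weight i)

lemma not_both_near (hv : IsSeparatedFamily v c c₀) {R y y' : ℝ} {k k' : ι} (hR : 0 < R)
    (hupper : y' - y ≤ c₀ / 32 / R ^ 2) (hlower : 5 / 16 * (c₀ / 32 / R ^ 2) ≤ y' - y)
    (hk : R ≤ c k) (hk' : R ≤ c k') (hk4 : c k < 4 * R) (hk4' : c k' < 4 * R)
    (hnear : |y - v k| < c₀ / 1024 / c k ^ 2) : c₀ / 1024 / c k' ^ 2 ≤ |y' - v k'| := by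
  by_contra! hnear'
  have hc₀ := hv.pos
  have hle : c₀ / 1024 / c k ^ 2 ≤ c₀ / 1024 / R ^ 2 := by gcongr
  have hle' : c₀ / 1024 / c k' ^ 2 ≤ c₀ / 1024 / R ^ 2 := by gcongr
  obtain ⟨Z, hZ⟩ : ∃ Z, Z = c₀ / R ^ 2 := ⟨_, rfl⟩
  have hZpos : 0 < Z := hZ ▸ by positivity
  rw [show c₀ / 32 / R ^ 2 = Z / 32 by rw [hZ]; ring] at hupper hlower
  rw [show c₀ / 1024 / R ^ 2 = Z / 1024 by rw [hZ]; ring] at hle hle'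
  rw [abs_lt] at hnear hnear'
  by_cases heq : v k = v k'
  · rw [heq] at hnear
    linarith
  · have hsep : Z / 16 < |v k - v k'| := by
      refine lt_of_lt_of_le ?_ (hv.sep k k' heq)
      have hckp := hv.weight_pos k
      have hckp' := hv.weight_pos k'
      rw [hZ, show c₀ / R ^ 2 / 16 = c₀ / (4 * R * (4 * R)) by field_simp; ring]
      gcongr
    have hclose : |v k - v k'| ≤ Z / 16 := abs_le.2 ⟨by linarith, by linarith⟩
    linarith

/-- Among three far apart subintervals, each of the two shifts can spoil at most one. -/
lemma exists_subinterval_avoiding (hv : IsSeparatedFamily v c c₀) (u : Fin 2 → ℝ) {R : ℝ}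
    (hR : 0 < R) (x : ℝ) :
    ∃ x', x ≤ x' ∧ x' + c₀ / 32 / (4 * R) ^ 2 ≤ x + c₀ / 32 / R ^ 2 ∧
      ∀ y ∈ Set.Icc x' (x' + c₀ / 32 / (4 * R) ^ 2), ∀ k, R ≤ c k → c k < 4 * R → ∀ l,
        c₀ / 1024 / c k ^ 2 ≤ |y + u l - v k| := by
  have hc₀ := hv.pos
  obtain ⟨Y, hY⟩ : ∃ Y, Y = c₀ / 32 / R ^ 2 := ⟨_, rfl⟩
  have hYpos : 0 < Y := hY ▸ by positivity
  rw [show c₀ / 32 / (4 * R) ^ 2 = Y / 16 by rw [hY]; field_simp; ring, ← hY]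
  by_contra! hspoiled
  have hm (m : Fin 3) : (m : ℝ) ≤ 2 := by exact_mod_cast Nat.le_of_lt_succ m.2
  choose y hy k hk hk4 l hl using fun m : Fin 3 ↦ hspoiled (x + 6 / 16 * Y * m)
    (le_add_of_nonneg_right (by positivity)) (by nlinarith [hm m])
  obtain ⟨m, m', hne, hll⟩ := Fintype.exists_ne_map_eq_of_card_lt l (by simp)
  wlog hlt : m < m' generalizing m m'
  · exact this m' m hne.symm hll.symm (hne.lt_or_gt.resolve_left hlt)
  have hmm' : (m : ℝ) + 1 ≤ m' := by exact_mod_cast hlt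
  refine (hl m').not_ge (hv.not_both_near hR ?_ ?_ (hk m) (hk m') (hk4 m) (hk4 m') (hll ▸ hl m))
  · rw [← hY]
    nlinarith [(hy m').2, (hy m).1, hm m', (Nat.cast_nonneg m : (0 : ℝ) ≤ m)]
  · rw [← hY]
    nlinarith [(hy m').1, (hy m).2]

lemma exists_interval_avoiding (hv : IsSeparatedFamily v c c₀) (u : Fin 2 → ℝ) (n : ℕ) :
    ∃ x, ∀ y ∈ Set.Icc x (x + c₀ / 32 / (4 ^ n * c₀) ^ 2), ∀ k, c k < 4 ^ n * c₀ → ∀ l,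
      c₀ / 1024 / c k ^ 2 ≤ |y + u l - v k| := by
  have hc₀ := hv.pos
  induction n with
  | zero => exact ⟨0, fun y _ k hk ↦ absurd (hv.le_weight k) (by simpa using hk)⟩
  | succ n ih =>
    obtain ⟨x, hx⟩ := ih
    obtain ⟨x', hle, hle', hx'⟩ :=
      hv.exists_subinterval_avoiding u (R := 4 ^ n * c₀) (by positivity) x
    rw [show (4 : ℝ) ^ (n + 1) * c₀ = 4 * (4 ^ n * c₀) by ring]
    refine ⟨x', fun y hy k hk ↦ ?_⟩
    rcases lt_or_ge (c k) (4 ^ n * c₀) with hlt | hge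
    · exact hx y ⟨hle.trans hy.1, hy.2.trans hle'⟩ k hlt
    · exact hx' y hy k hge hk

lemma exists_le_weight_near_midpoint (hv : IsSeparatedFamily v c c₀) (hdense : DenseRange v)
    {R x Y : ℝ} (hY : 0 < Y)
    (hx : ∀ y ∈ Set.Icc x (x + Y), ∀ k, c k < R → c₀ / 1024 / c k ^ 2 ≤ |y - v k|) :
    ∃ i, R ≤ c i ∧ |v i - (x + Y / 2)| < Y / 4 := by
  obtain ⟨i, hi⟩ := hdense.exists_dist_lt (x + Y / 2) (show 0 < Y / 4 by linarith)
  rw [dist_comm, Real.dist_eq] at hi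
  refine ⟨i, ?_, hi⟩
  by_contra! hlt
  have hiY := abs_lt.1 hi
  have hself := hx (v i) ⟨by linarith, by linarith⟩ i hlt
  rw [sub_self, abs_zero] at hself
  have := hv.pos
  have := hv.weight_pos i
  exact hself.not_gt (by positivity)

lemma div_sq_le_abs_sub_of_lt_half (hv : IsSeparatedFamily v c c₀) {i k : ι} {z b : ℝ}
    (hki : c k < c i / 2) (hi : |v i - z| ≤ b + c₀ / 128 / c i ^ 2)
    (hk : b + c₀ / 128 / c k ^ 2 < |v k - z|) : c₀ / 1024 / c k ^ 2 ≤ |v i - v k| := by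
  have hc₀ := hv.pos
  have hck := hv.weight_pos k
  have hpos : 0 < c₀ / 128 / c k ^ 2 := by positivity
  have herr : c₀ / 128 / c i ^ 2 ≤ c₀ / 128 / c k ^ 2 / 4 := by
    rw [show c₀ / 128 / c k ^ 2 / 4 = c₀ / 128 / (2 * c k) ^ 2 by ring]
    gcongr
    linarith
  linarith [abs_sub_le (v k) (v i) z, abs_sub_comm (v k) (v i),
    show c₀ / 1024 / c k ^ 2 = c₀ / 128 / c k ^ 2 / 8 by ring]

lemma div_sq_le_abs_sub_of_half_le (hv : IsSeparatedFamily v c c₀) {i k : ι} (hne : v k ≠ v i)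
    (hki : c i / 2 ≤ c k) : c₀ / 1024 / c k ^ 2 ≤ |v i - v k| := by
  have hc₀ := hv.pos
  have hck := hv.weight_pos k
  have hci := hv.weight_pos i
  calc c₀ / 1024 / c k ^ 2 = c₀ / (1024 * c k * c k) := by field_simp
    _ ≤ c₀ / (c i * c k) := by
      gcongr
      linarith
    _ ≤ |v i - v k| := hv.sep i k hne.symm

/-- A member of almost minimal weight among those that lie in the middle of the interval, up to an
error proportional to `1 / c i ^ 2`, is badly approximable: a competitor `k` of larger weight is
kept away by the separation, and one of smaller weight by minimality. -/
lemma exists_badlyApproximable_mem_Icc (hv : IsSeparatedFamily v c c₀)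
    (hdense : DenseRange v) {R x : ℝ} (hR : 0 < R)
    (hx : ∀ y ∈ Set.Icc x (x + c₀ / 32 / R ^ 2), ∀ k, c k < R → c₀ / 1024 / c k ^ 2 ≤ |y - v k|) :
    ∃ i, v i ∈ Set.Icc x (x + c₀ / 32 / R ^ 2) ∧ R ≤ c i ∧
      ∀ k, v k ≠ v i → c₀ / 1024 / c k ^ 2 ≤ |v i - v k| := by
  have hc₀ := hv.pos
  obtain ⟨Y, hY⟩ : ∃ Y, Y = c₀ / 32 / R ^ 2 := ⟨_, rfl⟩
  have hYpos : 0 < Y := hY ▸ by positivity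
  rw [← hY] at hx ⊢
  have herr (i : ι) : 0 < c₀ / 128 / c i ^ 2 := by
    have := hv.weight_pos i
    positivity
  let A : Set ι := {i | R ≤ c i ∧ |v i - (x + Y / 2)| ≤ Y / 4 + c₀ / 128 / c i ^ 2}
  have hA : A.Nonempty := by
    obtain ⟨i, hRi, hi⟩ := hv.exists_le_weight_near_midpoint hdense hYpos hx
    exact ⟨i, hRi, by linarith [herr i]⟩
  obtain ⟨i, ⟨hRi, hi⟩, hmin⟩ := exists_forall_half_le hA hR fun i hi ↦ hi.1
  have hmem : v i ∈ Set.Icc x (x + Y) := by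
    have hle : c₀ / 128 / c i ^ 2 ≤ Y / 4 := by
      rw [show Y / 4 = c₀ / 128 / R ^ 2 by rw [hY]; ring]
      gcongr
    have hi' := abs_le.1 hi
    constructor <;> linarith
  refine ⟨i, hmem, hRi, fun k hk ↦ ?_⟩
  rcases lt_or_ge (c k) R with hkR | hkR
  · exact hx (v i) hmem k hkR
  rcases lt_or_ge (c k) (c i / 2) with hki | hki
  · refine hv.div_sq_le_abs_sub_of_lt_half hki hi ?_
    by_contra! hle
    exact hki.not_ge (hmin k ⟨hkR, hle⟩)
  · exact hv.div_sq_le_abs_sub_of_half_le hk hki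

lemma exists_badlyApproximable_pair (hv : IsSeparatedFamily v c c₀) (hdense : DenseRange v)
    (t R : ℝ) {ε : ℝ} (hε : 0 < ε) :
    ∃ i j, R ≤ c i ∧ R ≤ c j ∧ |v j - v i - t| ≤ ε ∧
      (∀ k, v k ≠ v i → c₀ / 1024 / c k ^ 2 ≤ |v i - v k|) ∧
      ∀ k, v k ≠ v j → c₀ / 1024 / c k ^ 2 ≤ |v j - v k| := by
  have hc₀ := hv.pos
  obtain ⟨n, hn, hnε⟩ := exists_four_pow_large hc₀ R hε
  obtain ⟨x, hx⟩ := hv.exists_interval_avoiding ![0, t] n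
  have hpos : 0 < 4 ^ n * c₀ := by positivity
  obtain ⟨i, hi, hRi, hbadi⟩ := hv.exists_badlyApproximable_mem_Icc hdense (x := x) hpos
    fun y hy k hk ↦ by simpa using hx y hy k hk 0
  obtain ⟨j, hj, hRj, hbadj⟩ := hv.exists_badlyApproximable_mem_Icc hdense (x := x + t) hpos
    fun y hy k hk ↦ by
      simpa using hx (y - t) ⟨by linarith [hy.1], by linarith [hy.2]⟩ k hk 1
  refine ⟨i, j, hn.trans hRi, hn.trans hRj, abs_le.2 ?_, hbadi, hbadj⟩
  constructor <;> linarith [hi.1, hi.2, hj.1, hj.2]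

end IsSeparatedFamily

/-! ### Three-term recurrences -/

/-- The sequence `y` solves the three-term recurrence with weights `c` and coefficients `w`. The
matrix entries of the products `s 0 * s 1 * ⋯ * s (n - 1)` in `SL(2,ℝ)` satisfy such a
recurrence, where `c n` is the lower left entry of `s n`. -/
def IsSolution (c w y : ℕ → ℝ) : Prop :=
  ∀ n, y (n + 2) / c (n + 1) + y n / c n = w n * y (n + 1)

/-- The coefficients `w` are so large that the recurrence with weights `c` has one solution
growing and one solution decaying at each step. -/
structure IsExpanding (K : ℝ) (c w : ℕ → ℝ) : Prop where
  four_le : 4 ≤ K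
  one_le_mul_sq n : 1 ≤ K * c n ^ 2
  four_le_mul_abs n : 4 ≤ K * |c n|
  add_one_le_abs n : K + 1 ≤ |w n|

lemma IsSolution.linear_combination {c w x y : ℕ → ℝ} (hx : IsSolution c w x)
    (hy : IsSolution c w y) (β γ : ℝ) : IsSolution c w (fun n ↦ β * x n + γ * y n) :=
  fun n ↦ by linear_combination β * hx n + γ * hy n

lemma exists_eq_map_succ_of_lt {X : Type*} [Nonempty X] (m : ℕ) (f : ℕ → X → X) :
    ∃ s : ℕ → X, ∀ n < m, s n = f n (s (n + 1)) := by
  induction m generalizing f with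
  | zero => exact ⟨fun _ ↦ Classical.arbitrary X, by simp⟩
  | succ m ih =>
    obtain ⟨s, hs⟩ := ih fun n ↦ f (n + 1)
    refine ⟨fun n ↦ n.casesOn (f 0 (s 0)) s, fun n hn ↦ ?_⟩
    cases n with
    | zero => rfl
    | succ n => exact hs n (Nat.succ_lt_succ_iff.1 hn)

lemma exists_eq_map_succ_of_compactSpace {X : Type*} [TopologicalSpace X] [CompactSpace X]
    [T2Space X] [Nonempty X] {f : ℕ → X → X} (hf : ∀ n, Continuous (f n)) :
    ∃ s : ℕ → X, ∀ n, s n = f n (s (n + 1)) := by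
  let A (m : ℕ) : Set (ℕ → X) := {s | ∀ n < m, s n = f n (s (n + 1))}
  have A_closed (m : ℕ) : IsClosed (A m) := by
    simp only [A, Set.ofPred_forall]
    exact isClosed_iInter fun n ↦ isClosed_iInter fun _ ↦
      isClosed_eq (continuous_apply n) ((hf n).comp (continuous_apply (n + 1)))
  obtain ⟨s, hs⟩ := IsCompact.nonempty_iInter_of_sequence_nonempty_isCompact_isClosed A
    (fun m s hs n hn ↦ hs n (hn.trans m.lt_succ_self)) (fun m ↦ exists_eq_map_succ_of_lt m f)
    (A_closed 0).isCompact A_closed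
  exact ⟨s, fun n ↦ Set.mem_iInter.1 hs (n + 1) n n.lt_succ_self⟩

lemma exists_forall_isExpanding {c₀ : ℝ} (hc₀ : 0 < c₀) :
    ∃ K : ℝ, ∀ c w : ℕ → ℝ, (∀ n, c₀ ≤ |c n|) → (∀ n, K + 1 ≤ |w n|) → IsExpanding K c w := by
  have hpos : 0 < 4 / c₀ := by positivity
  have hpos' : 0 < 1 / c₀ ^ 2 := by positivity
  refine ⟨4 + 4 / c₀ + 1 / c₀ ^ 2, fun c w hc hw ↦ ⟨by linarith, fun n ↦ ?_, fun n ↦ ?_, hw⟩⟩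
  · calc 1 = 1 / c₀ ^ 2 * c₀ ^ 2 := by field_simp
      _ ≤ (4 + 4 / c₀ + 1 / c₀ ^ 2) * |c n| ^ 2 := by
        gcongr
        · linarith
        · exact hc n
      _ = (4 + 4 / c₀ + 1 / c₀ ^ 2) * c n ^ 2 := by rw [sq_abs]
  · calc 4 = 4 / c₀ * c₀ := by field_simp
      _ ≤ (4 + 4 / c₀ + 1 / c₀ ^ 2) * |c n| := by
        gcongr
        · linarith
        · exact hc n

namespace IsExpanding

variable {K : ℝ} {c w : ℕ → ℝ}

lemma weight_ne_zero (h : IsExpanding K c w) (n : ℕ) : c n ≠ 0 := fun hc ↦ by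
  have := h.four_le_mul_abs n
  norm_num [hc] at this

lemma le_abs_sub (h : IsExpanding K c w) {s : ℝ} (hs : |s| ≤ 1) (n : ℕ) :
    K ≤ |w n - s| := by
  linarith [abs_sub_abs_le_abs_sub (w n) s, h.add_one_le_abs n]

lemma inv_sq_add_inv_sq_div_le_two (h : IsExpanding K c w) (n : ℕ) :
    (1 / c n ^ 2 + 1 / c (n + 1) ^ 2) / K ≤ 2 := by
  have inv_sq_le (m : ℕ) : 1 / c m ^ 2 ≤ K := by
    have := h.weight_ne_zero m
    rw [div_le_iff₀ (by positivity)]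
    exact h.one_le_mul_sq m
  rw [div_le_iff₀ (by linarith [h.four_le])]
  linarith [inv_sq_le n, inv_sq_le (n + 1)]

lemma growth_succ (h : IsExpanding K c w) {y : ℕ → ℝ} (hy : IsSolution c w y)
    {n : ℕ} (hn : K * |c n| * |y n| ≤ |y (n + 1)|) :
    K * |c (n + 1)| * |y (n + 1)| ≤ |y (n + 2)| := by
  have hc : 0 < |c n| := abs_pos.2 (h.weight_ne_zero n)
  have hc' : 0 < |c (n + 1)| := abs_pos.2 (h.weight_ne_zero (n + 1))
  have quotient_le : |y n| / |c n| ≤ |y (n + 1)| := by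
    rw [div_le_iff₀ hc]
    have := h.one_le_mul_sq n
    rw [← sq_abs] at this
    nlinarith [abs_nonneg (y n)]
  have triangle : |w n| * |y (n + 1)| ≤ |y (n + 2)| / |c (n + 1)| + |y n| / |c n| := by
    rw [← abs_mul, ← hy n, ← abs_div, ← abs_div]
    exact abs_add_le _ _
  have : K * |y (n + 1)| ≤ |y (n + 2)| / |c (n + 1)| := by
    nlinarith [h.add_one_le_abs n, abs_nonneg (y (n + 1))]
  rw [le_div_iff₀ hc'] at this
  linarith

lemma growth (h : IsExpanding K c w) {y : ℕ → ℝ} (hy : IsSolution c w y)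
    (h0 : y 0 = 0) (n : ℕ) : K * |c n| * |y n| ≤ |y (n + 1)| := by
  induction n with
  | zero => simp [h0]
  | succ n ih => exact h.growth_succ hy ih

lemma abs_coeff_le (h : IsExpanding K c w) {x : ℕ → ℝ} {M : ℝ} (hx : IsSolution c w x)
    {n : ℕ} (hn : |c n| ≤ M * |x n| * |x (n + 1)|)
    (hn' : |c (n + 1)| ≤ M * |x (n + 1)| * |x (n + 2)|) :
    |w n| ≤ 2 * M * (|x n| / |c n|) * (|x (n + 2)| / |c (n + 1)|) := by
  have hc := abs_pos.2 (h.weight_ne_zero n)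
  have hc' := abs_pos.2 (h.weight_ne_zero (n + 1))
  have hpos : 0 < |x (n + 1)| := (abs_nonneg _).lt_of_ne' fun h0 ↦ by
    rw [h0, mul_zero] at hn
    linarith
  have triangle : |w n| * |x (n + 1)| ≤ |x n| / |c n| + |x (n + 2)| / |c (n + 1)| := by
    rw [← abs_mul, ← hx n, ← abs_div, ← abs_div, add_comm]
    exact abs_add_le _ _
  have left_ge : 1 ≤ M * (|x n| / |c n|) * |x (n + 1)| := by
    rw [mul_div_assoc', div_mul_eq_mul_div, one_le_div hc]
    exact hn
  have right_ge : 1 ≤ M * (|x (n + 2)| / |c (n + 1)|) * |x (n + 1)| := by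
    rw [mul_div_assoc', div_mul_eq_mul_div, one_le_div hc']
    linarith
  have left_nonneg : 0 ≤ |x n| / |c n| := by positivity
  have right_nonneg : 0 ≤ |x (n + 2)| / |c (n + 1)| := by positivity
  refine le_of_mul_le_mul_right ?_ hpos
  nlinarith [mul_le_mul_of_nonneg_left left_ge right_nonneg,
    mul_le_mul_of_nonneg_left right_ge left_nonneg]

/-- The continued fraction `1 / (c 0 ^ 2 * (w 0 - 1 / (c 1 ^ 2 * (w 1 - ⋯))))` and its tails. -/
lemma exists_tails (h : IsExpanding K c w) : ∃ σ : ℕ → ℝ,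
    ∀ n, |σ n| ≤ 1 ∧ σ n * (w n - σ (n + 1)) * c n ^ 2 = 1 := by
  have denom_le (n : ℕ) (s : Set.Icc (-1 : ℝ) 1) : 1 ≤ |c n ^ 2 * (w n - s)| := by
    rw [abs_mul, abs_of_nonneg (sq_nonneg _)]
    nlinarith [h.one_le_mul_sq n, h.le_abs_sub (abs_le.2 s.2) n, sq_nonneg (c n)]
  have denom_ne (n : ℕ) (s : Set.Icc (-1 : ℝ) 1) : c n ^ 2 * (w n - s) ≠ 0 :=
    abs_pos.1 (one_pos.trans_le (denom_le n s))
  have inv_le (n : ℕ) (s : Set.Icc (-1 : ℝ) 1) : |(c n ^ 2 * (w n - s))⁻¹| ≤ 1 := by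
    rw [abs_inv]
    exact inv_le_one_of_one_le₀ (denom_le n s)
  let f (n : ℕ) (s : Set.Icc (-1 : ℝ) 1) : Set.Icc (-1 : ℝ) 1 :=
    ⟨(c n ^ 2 * (w n - s))⁻¹, abs_le.1 (inv_le n s)⟩
  have hf (n : ℕ) : Continuous (f n) :=
    Continuous.subtype_mk ((by fun_prop : Continuous fun s : Set.Icc (-1 : ℝ) 1 ↦
      c n ^ 2 * (w n - s)).inv₀ (denom_ne n)) _
  have : Nonempty (Set.Icc (-1 : ℝ) 1) := ⟨0, by norm_num⟩
  obtain ⟨σ, hσ⟩ := exists_eq_map_succ_of_compactSpace hf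
  refine ⟨fun n ↦ σ n, fun n ↦ ⟨abs_le.2 (σ n).2, ?_⟩⟩
  have σ_eq : (σ n : ℝ) = (c n ^ 2 * (w n - σ (n + 1)))⁻¹ := congrArg Subtype.val (hσ n)
  change (σ n : ℝ) * (w n - σ (n + 1)) * c n ^ 2 = 1
  rw [σ_eq, mul_assoc, mul_comm (w n - _), inv_mul_cancel₀ (denom_ne n _)]

lemma recessive_succ (h : IsExpanding K c w) {r σ : ℕ → ℝ} (hr : IsSolution c w r)
    (hσ : ∀ n, σ n * (w n - σ (n + 1)) * c n ^ 2 = 1) (h0 : r 1 = σ 0 * c 0 * r 0) (n : ℕ) :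
    r (n + 1) = σ n * c n * r n := by
  induction n with
  | zero => exact h0
  | succ n ih =>
    have hc := h.weight_ne_zero n
    have hc' := h.weight_ne_zero (n + 1)
    have quotient_eq : r n / c n = r (n + 1) * (w n - σ (n + 1)) := by
      rw [div_eq_iff hc, ih]
      linear_combination (-r n) * hσ n
    have : r (n + 2) / c (n + 1) = σ (n + 1) * r (n + 1) := by
      linear_combination hr n - quotient_eq
    rw [div_eq_iff hc'] at this
    rw [this]
    ring

lemma decay (h : IsExpanding K c w) {r σ : ℕ → ℝ} (hr : IsSolution c w r)
    (hσ : ∀ n, |σ n| ≤ 1 ∧ σ n * (w n - σ (n + 1)) * c n ^ 2 = 1)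
    (h0 : r 1 = σ 0 * c 0 * r 0) (n : ℕ) :
    K * |c n| * |r (n + 1)| ≤ |r n| := by
  have hrn : r n = (w n - σ (n + 1)) * (c n * r (n + 1)) := by
    rw [h.recessive_succ hr (fun m ↦ (hσ m).2) h0 n]
    linear_combination (-r n) * (hσ n).2
  rw [hrn, abs_mul, abs_mul, mul_assoc]
  gcongr
  exact h.le_abs_sub (hσ (n + 1)).1 n

end IsExpanding

/-- A growing solution `q` and a decaying solution `r` of a three-term recurrence, normalised
by `q 0 = 0` and by the value of their Wronskian. -/
structure IsDichotomy (K : ℝ) (c w q r : ℕ → ℝ) : Prop extends IsExpanding K c w where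
  growing : IsSolution c w q
  decaying : IsSolution c w r
  growing_zero : q 0 = 0
  wronskian n : r (n + 1) * q n - r n * q (n + 1) = c n
  growth n : K * |c n| * |q n| ≤ |q (n + 1)|
  decay n : K * |c n| * |r (n + 1)| ≤ |r n|

lemma IsExpanding.exists_isDichotomy {K : ℝ} {c w a q : ℕ → ℝ} (h : IsExpanding K c w)
    (ha : IsSolution c w a) (hq : IsSolution c w q) (ha0 : a 0 = 1) (hq0 : q 0 = 0)
    (wronskian : ∀ n, a n * q (n + 1) - a (n + 1) * q n = c n) :
    ∃ α : ℝ, IsDichotomy K c w q (fun n ↦ α * q n - a n) := by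
  obtain ⟨σ, hσ⟩ := h.exists_tails
  have hq1 : q 1 = c 0 := by simpa [ha0, hq0] using wronskian 0
  refine ⟨a 1 / q 1 - σ 0, ?_⟩
  have hr : IsSolution c w (fun n ↦ (a 1 / q 1 - σ 0) * q n - a n) := by
    simpa [sub_eq_add_neg] using hq.linear_combination ha (a 1 / q 1 - σ 0) (-1)
  have h0 : (a 1 / q 1 - σ 0) * q 1 - a 1 = σ 0 * c 0 * ((a 1 / q 1 - σ 0) * q 0 - a 0) := by
    have := h.weight_ne_zero 0
    rw [hq0, ha0, hq1]
    field_simp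
    ring
  exact
    { toIsExpanding := h
      growing := hq
      decaying := hr
      growing_zero := hq0
      wronskian := fun n ↦ by linear_combination wronskian n
      growth := h.growth hq hq0
      decay := h.decay hr hσ h0 }

namespace IsDichotomy

variable {K : ℝ} {c w q r : ℕ → ℝ}

lemma decaying_ne_zero (h : IsDichotomy K c w q r) (n : ℕ) : r n ≠ 0 := by
  intro hrn
  have hpos : 0 < K * |c n| := by linarith [h.four_le_mul_abs n]
  have hrn' : r (n + 1) = 0 := by
    have := h.decay n
    rw [hrn, abs_zero] at this
    exact abs_nonpos_iff.1 (nonpos_of_mul_nonpos_right this hpos)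
  apply h.weight_ne_zero n
  rw [← h.wronskian n, hrn, hrn']
  ring

lemma growing_succ_ne_zero (h : IsDichotomy K c w q r) (n : ℕ) : q (n + 1) ≠ 0 := by
  intro hqn
  have hpos : 0 < K * |c n| := by linarith [h.four_le_mul_abs n]
  have hqn' : q n = 0 := by
    have := h.growth n
    rw [hqn, abs_zero] at this
    exact abs_nonpos_iff.1 (nonpos_of_mul_nonpos_right this hpos)
  apply h.weight_ne_zero n
  rw [← h.wronskian n, hqn, hqn']
  ring

lemma strictMono_abs_growing_succ (h : IsDichotomy K c w q r) :
    StrictMono fun n ↦ |q (n + 1)| := by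
  refine strictMono_nat_of_lt_succ fun n ↦ ?_
  have hpos : 0 < |q (n + 1)| := abs_pos.2 (h.growing_succ_ne_zero n)
  nlinarith [h.growth (n + 1), h.four_le_mul_abs (n + 1)]

lemma abs_inv_sub_abs_le (h : IsDichotomy K c w q r) (n : ℕ) :
    abs ((|q (n + 1)| * |r (n + 1)|)⁻¹ - |w n|) ≤ (1 / c n ^ 2 + 1 / c (n + 1) ^ 2) / K := by
  have hK : 0 < K := by linarith [h.four_le]
  have hc := h.weight_ne_zero n
  have hc' := h.weight_ne_zero (n + 1)
  have hq := h.growing_succ_ne_zero n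
  have hr := h.decaying_ne_zero (n + 1)
  have growing_quotient : |q n / (c n * q (n + 1))| ≤ 1 / c n ^ 2 / K := by
    rw [abs_div, abs_mul, div_div, div_le_div_iff₀ (by positivity) (by positivity), ← sq_abs (c n)]
    nlinarith [h.growth n, abs_pos.2 hc]
  have decaying_quotient : |r (n + 2) / (c (n + 1) * r (n + 1))| ≤ 1 / c (n + 1) ^ 2 / K := by
    rw [abs_div, abs_mul, div_div, div_le_div_iff₀ (by positivity) (by positivity),
      ← sq_abs (c (n + 1))]
    nlinarith [h.decay (n + 1), abs_pos.2 hc']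
  have inv_add : (q (n + 1) * r (n + 1))⁻¹ + w n =
      q n / (c n * q (n + 1)) + r (n + 2) / (c (n + 1) * r (n + 1)) := by
    have hwr := h.wronskian n
    have hrec := h.decaying n
    field_simp at hrec ⊢
    linear_combination (-c (n + 1)) * hwr - q (n + 1) * hrec
  calc abs ((|q (n + 1)| * |r (n + 1)|)⁻¹ - |w n|)
      = abs (|(q (n + 1) * r (n + 1))⁻¹| - |-w n|) := by rw [abs_inv, abs_mul, abs_neg]
    _ ≤ |(q (n + 1) * r (n + 1))⁻¹ - -w n| := abs_abs_sub_abs_le_abs_sub _ _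
    _ = |q n / (c n * q (n + 1)) + r (n + 2) / (c (n + 1) * r (n + 1))| := by
      rw [sub_neg_eq_add, inv_add]
    _ ≤ (1 / c n ^ 2 + 1 / c (n + 1) ^ 2) / K := by
      rw [add_div]
      exact (abs_add_le _ _).trans (add_le_add growing_quotient decaying_quotient)

lemma one_le_two_mul_abs_mul (h : IsDichotomy K c w q r) (n : ℕ) :
    1 ≤ 2 * |w n| * (|q (n + 1)| * |r (n + 1)|) := by
  have hpos : 0 < |q (n + 1)| * |r (n + 1)| :=
    mul_pos (abs_pos.2 (h.growing_succ_ne_zero n)) (abs_pos.2 (h.decaying_ne_zero (n + 1)))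
  rw [← div_le_iff₀ hpos, one_div]
  linarith [(abs_le.1 (h.abs_inv_sub_abs_le n)).2, h.inv_sq_add_inv_sq_div_le_two n,
    h.add_one_le_abs n, h.four_le]

section TurningPoint

variable {x : ℕ → ℝ} {M β γ δ : ℝ}

lemma exists_turningPoint (h : IsDichotomy K c w q r) (hδ : 0 < δ) (hx : ∀ n, δ ≤ |x n|) :
    ∃ n, 2 * |r (n + 1)| * |x n| ≤ |r n| * |x (n + 1)| := by
  by_contra! hlt
  have halving (n : ℕ) : |x (n + 1)| ≤ 1 / 2 * |x n| := by
    have hr : 0 < |r n| := abs_pos.2 (h.decaying_ne_zero n)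
    have : 4 * |r (n + 1)| ≤ |r n| :=
      (mul_le_mul_of_nonneg_right (h.four_le_mul_abs n) (abs_nonneg _)).trans (h.decay n)
    refine le_of_mul_le_mul_left ?_ hr
    nlinarith [hlt n, abs_nonneg (x n)]
  have tendsto_zero : Filter.Tendsto (fun n : ℕ ↦ (1 / 2 : ℝ) ^ n * |x 0|) Filter.atTop
      (nhds 0) := by
    simpa using (tendsto_pow_atTop_nhds_zero_of_lt_one (by norm_num : (0 : ℝ) ≤ 1 / 2)
      (by norm_num)).mul_const |x 0|
  obtain ⟨n, hn⟩ := (tendsto_zero.eventually_lt_const hδ).exists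
  have : |x n| ≤ (1 / 2) ^ n * |x 0| :=
    le_geom (u := fun n ↦ |x n|) (by norm_num) n fun k _ ↦ halving k
  linarith [hx n]

lemma abs_decaying_mul_le (h : IsDichotomy K c w q r) (hx : ∀ n, x n = β * r n + γ * q n)
    {n : ℕ} (hn : 2 * |r (n + 1)| * |x n| ≤ |r n| * |x (n + 1)|) :
    |r n| * |x (n + 1)| ≤ 2 * |γ| * |c n| := by
  have wronskian : r n * x (n + 1) = r (n + 1) * x n - γ * c n := by
    rw [hx, hx, ← h.wronskian n]
    ring
  have : |r n| * |x (n + 1)| ≤ |r (n + 1)| * |x n| + |γ| * |c n| := by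
    rw [← abs_mul, ← abs_mul, ← abs_mul, wronskian]
    exact abs_sub _ _
  linarith

lemma abs_growing_mul_le (h : IsDichotomy K c w q r) (hx : ∀ n, x n = β * r n + γ * q n)
    {n : ℕ} (hn : |r n| * |x (n + 1)| < 2 * |r (n + 1)| * |x n|) :
    |q (n + 1)| * |x n| ≤ 2 * |β| * |c n| := by
  have wronskian : q (n + 1) * x n = q n * x (n + 1) - β * c n := by
    rw [hx, hx, ← h.wronskian n]
    ring
  have triangle : |q (n + 1)| * |x n| ≤ |q n| * |x (n + 1)| + |β| * |c n| := by
    rw [← abs_mul, ← abs_mul, ← abs_mul, wronskian]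
    exact abs_sub _ _
  have hKc := h.four_le_mul_abs n
  have x_decay : K * |c n| * |x (n + 1)| ≤ 2 * |x n| := by
    refine le_of_mul_le_mul_left ?_ (abs_pos.2 (h.decaying_ne_zero (n + 1)))
    nlinarith [h.decay n, abs_nonneg (x (n + 1))]
  have x_small : 2 * |x (n + 1)| ≤ |x n| := by nlinarith [abs_nonneg (x (n + 1))]
  have q_small : |q n| ≤ |q (n + 1)| := by nlinarith [h.growth n, abs_nonneg (q n)]
  have : |q n| * (2 * |x (n + 1)|) ≤ |q (n + 1)| * |x n| := by gcongr
  linarith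

lemma one_le_of_turningPoint_zero (h : IsDichotomy K c w q r) (hM : 0 ≤ M)
    (hx : ∀ n, x n = β * r n + γ * q n) (hxc : |c 0| ≤ M * |x 0| * |x 1|)
    (turning : 2 * |r 1| * |x 0| ≤ |r 0| * |x 1|) : 1 ≤ 2 * M * |β| * |γ| := by
  have hx0 : |x 0| = |β| * |r 0| := by rw [hx 0, h.growing_zero, mul_zero, add_zero, abs_mul]
  refine le_of_mul_le_mul_right ?_ (abs_pos.2 (h.weight_ne_zero 0))
  calc 1 * |c 0| ≤ M * |x 0| * |x 1| := by rwa [one_mul]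
    _ = M * |β| * (|r 0| * |x 1|) := by rw [hx0]; ring
    _ ≤ M * |β| * (2 * |γ| * |c 0|) :=
      mul_le_mul_of_nonneg_left (h.abs_decaying_mul_le hx turning) (by positivity)
    _ = 2 * M * |β| * |γ| * |c 0| := by ring

lemma one_le_of_turningPoint_succ (h : IsDichotomy K c w q r) (hM : 0 ≤ M)
    (hx : ∀ n, x n = β * r n + γ * q n) (hxc : ∀ n, |c n| ≤ M * |x n| * |x (n + 1)|) {m : ℕ}
    (not_turning : |r m| * |x (m + 1)| < 2 * |r (m + 1)| * |x m|)
    (turning : 2 * |r (m + 2)| * |x (m + 1)| ≤ |r (m + 1)| * |x (m + 2)|) :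
    1 ≤ 16 * M * |β| * |γ| := by
  have hsol : IsSolution c w x := by
    rw [funext hx]
    exact h.decaying.linear_combination h.growing β γ
  have hc := abs_pos.2 (h.weight_ne_zero m)
  have hc' := abs_pos.2 (h.weight_ne_zero (m + 1))
  calc 1 ≤ 2 * |w m| * (|q (m + 1)| * |r (m + 1)|) := h.one_le_two_mul_abs_mul m
    _ ≤ 2 * (2 * M * (|x m| / |c m|) * (|x (m + 2)| / |c (m + 1)|)) *
        (|q (m + 1)| * |r (m + 1)|) := by
      gcongr
      exact h.abs_coeff_le hsol (hxc m) (hxc (m + 1))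
    _ = 4 * M * (|q (m + 1)| * |x m| / |c m|) * (|r (m + 1)| * |x (m + 2)| / |c (m + 1)|) := by
      ring
    _ ≤ 4 * M * (2 * |β|) * (2 * |γ|) := by
      gcongr
      · exact (div_le_iff₀ hc).2 (h.abs_growing_mul_le hx not_turning)
      · exact (div_le_iff₀ hc').2 (h.abs_decaying_mul_le hx turning)
    _ = 16 * M * |β| * |γ| := by ring

/-- Consider the first index at which `x` turns from decaying to growing: just before it `x` is
comparable to its component `β * r`, just after it to its component `γ * q`. -/
lemma one_le_sixteen_mul (h : IsDichotomy K c w q r) (hM : 0 ≤ M) (hδ : 0 < δ)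
    (hx : ∀ n, x n = β * r n + γ * q n) (hxδ : ∀ n, δ ≤ |x n|)
    (hxc : ∀ n, |c n| ≤ M * |x n| * |x (n + 1)|) : 1 ≤ 16 * M * |β| * |γ| := by
  classical
  have hex := h.exists_turningPoint hδ hxδ
  have turning := Nat.find_spec hex
  rcases hN : Nat.find hex with _ | m <;> rw [hN] at turning
  · have : 0 ≤ M * |β| * |γ| := by positivity
    linarith [h.one_le_of_turningPoint_zero hM hx (hxc 0) turning]
  · have not_turning := not_le.1 (Nat.find_min hex (m := m) (by omega))
    exact h.one_le_of_turningPoint_succ hM hx hxc not_turning turning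

end TurningPoint

end IsDichotomy

/-! ### Cusps of the group and the Lagrange set -/

/-- The error `c(g)² |α - g·∞|` of approximating `α` by `g·∞`, in a form without denominators. -/
def cuspError (α : ℝ) (g : SL2R) : ℝ := |entryC g| * |α * entryC g - entryA g|

lemma abs_sub_lt_iff_cuspError {α k : ℝ} {g : SL2R} (hk : 0 < k) (hc : entryC g ≠ 0) :
    |α - entryA g / entryC g| < 1 / (k * entryC g ^ 2) ↔ k * cuspError α g < 1 := by
  have := abs_pos.2 hc
  have herr : |α - entryA g / entryC g| = cuspError α g / entryC g ^ 2 := by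
    rw [cuspError, ← sq_abs (entryC g), show α - entryA g / entryC g =
      (α * entryC g - entryA g) / entryC g by field_simp, abs_div]
    field_simp
  rw [herr, ← div_div, div_lt_div_iff_of_pos_right (by positivity), lt_div_iff₀' hk]

lemma mem_lagrangeSet_iff {G : Subgroup SL2R} {α k : ℝ} :
    k ∈ LagrangeSet G α ↔ 0 < k ∧ {v : ℝ | ∃ g ∈ G, entryC g ≠ 0 ∧
      v = entryA g / entryC g ∧ k * cuspError α g < 1}.Infinite := by
  refine and_congr_right fun hk ↦ ?_
  have hset : {v : ℝ | ∃ g ∈ G, entryC g ≠ 0 ∧ v = entryA g / entryC g ∧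
      |α - v| < 1 / (k * entryC g ^ 2)} = {v : ℝ | ∃ g ∈ G, entryC g ≠ 0 ∧
      v = entryA g / entryC g ∧ k * cuspError α g < 1} := by
    ext v
    refine exists_congr fun g ↦ and_congr_right fun _ ↦ and_congr_right fun hc ↦
      and_congr_right fun hv ↦ ?_
    rw [hv, abs_sub_lt_iff_cuspError hk hc]
  rw [hset]

lemma abs_div_entryC_sub {g h : SL2R} (hg : entryC g ≠ 0) (hh : entryC h ≠ 0) :
    |entryA g / entryC g - entryA h / entryC h| =
      |entryC (g⁻¹ * h)| / (|entryC g| * |entryC h|) := by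
  rw [entryC_inv_mul, div_sub_div _ _ hg hh, abs_div, abs_mul]

lemma div_entryC_eq_iff {g h : SL2R} (hg : entryC g ≠ 0) (hh : entryC h ≠ 0) :
    entryA g / entryC g = entryA h / entryC h ↔ entryC (g⁻¹ * h) = 0 := by
  rw [div_eq_div_iff hg hh, entryC_inv_mul, sub_eq_zero, mul_comm (entryC g)]

namespace IsDiscreteSubgroup

variable {G : Subgroup SL2R} {g h : SL2R}

lemma exists_sign_mul (hG : IsDiscreteSubgroup G) (hcusp : HasCuspAtInfty G) (hg : g ∈ G)
    (hh : h ∈ G) (hgh : entryC (g⁻¹ * h) = 0) :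
    ∃ ε : ℝ, |ε| = 1 ∧ entryA h = ε * entryA g ∧ entryC h = ε * entryC g := by
  refine ⟨entryA (g⁻¹ * h), hG.abs_entryA_eq_one hcusp (G.mul_mem (G.inv_mem hg) hh) hgh, ?_, ?_⟩
  · conv_lhs => rw [← mul_inv_cancel_left g h, entryA_mul, hgh]
    ring
  · conv_lhs => rw [← mul_inv_cancel_left g h, entryC_mul, hgh]
    ring

lemma abs_entryC_eq (hG : IsDiscreteSubgroup G) (hcusp : HasCuspAtInfty G) (hg : g ∈ G)
    (hh : h ∈ G) (hgh : entryC (g⁻¹ * h) = 0) : |entryC h| = |entryC g| := by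
  obtain ⟨ε, hε, -, hc⟩ := hG.exists_sign_mul hcusp hg hh hgh
  rw [hc, abs_mul, hε, one_mul]

lemma cuspError_eq (hG : IsDiscreteSubgroup G) (hcusp : HasCuspAtInfty G) (hg : g ∈ G)
    (hh : h ∈ G) (hgh : entryC (g⁻¹ * h) = 0) (α : ℝ) : cuspError α h = cuspError α g := by
  obtain ⟨ε, hε, ha, hc⟩ := hG.exists_sign_mul hcusp hg hh hgh
  rw [cuspError, cuspError, ha, hc, show α * (ε * entryC g) - ε * entryA g =
    ε * (α * entryC g - entryA g) by ring, abs_mul, abs_mul, hε, one_mul, one_mul]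

end IsDiscreteSubgroup

/-! ### Badly approximable cusps -/

/-- The cusp `h·∞` is badly approximable by the other cusps `g·∞`: cleared of denominators, the
inequality says `|h·∞ - g·∞| ≥ 1 / (M c(g)²)`. -/
def IsBadlyApproximable (G : Subgroup SL2R) (M : ℝ) (h : SL2R) : Prop :=
  ∀ g ∈ G, entryC g ≠ 0 → entryC (h⁻¹ * g) ≠ 0 →
    |entryC h| ≤ M * |entryC g| * |entryC (h⁻¹ * g)|

namespace IsBadlyApproximable

variable {G : Subgroup SL2R} {M κ : ℝ} {g h : SL2R}

lemma inv (hh : h ∈ G) (hbad : IsBadlyApproximable G M h) : IsBadlyApproximable G M h⁻¹ := by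
  intro g hg hgc hhg
  rw [inv_inv] at hhg ⊢
  have := hbad (h * g) (G.mul_mem hh hg) hhg (by rwa [inv_mul_cancel_left])
  rw [inv_mul_cancel_left] at this
  rw [entryC_inv, abs_neg]
  linarith

lemma congr (hbad : IsBadlyApproximable G M h) (ha : entryA g = entryA h)
    (hc : entryC g = entryC h) : IsBadlyApproximable G M g := by
  intro k hk hkc hgk
  rw [entryC_inv_mul, ha, hc, ← entryC_inv_mul] at hgk ⊢
  exact hbad k hk hkc hgk

lemma of_forall_div_le (hκ : 0 < κ) (hc : entryC h ≠ 0)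
    (hsep : ∀ g ∈ G, entryC g ≠ 0 → entryA g / entryC g ≠ entryA h / entryC h →
      κ / |entryC g| ^ 2 ≤ |entryA h / entryC h - entryA g / entryC g|) :
    IsBadlyApproximable G κ⁻¹ h := by
  intro g hg hgc hhg
  have hgpos := abs_pos.2 hgc
  have := abs_pos.2 hc
  have hle := hsep g hg hgc fun heq ↦ hhg ((div_entryC_eq_iff hc hgc).1 heq.symm)
  rw [abs_div_entryC_sub hc hgc, div_le_div_iff₀ (by positivity) (by positivity)] at hle
  rw [mul_assoc, ← div_eq_inv_mul, le_div_iff₀ hκ]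
  refine le_of_mul_le_mul_right ?_ hgpos
  linarith

end IsBadlyApproximable

lemma isSeparatedFamily_cusps {G : Subgroup SL2R} {c₀ : ℝ} (hc₀ : 0 < c₀)
    (hle : ∀ g ∈ G, entryC g ≠ 0 → c₀ ≤ |entryC g|) :
    IsSeparatedFamily (fun g : {g // g ∈ G ∧ entryC g ≠ 0} ↦ entryA g.1 / entryC g.1)
      (fun g ↦ |entryC g.1|) c₀ where
  pos := hc₀
  le_weight g := hle g.1 g.2.1 g.2.2
  sep := by
    rintro ⟨g, hg, hgc⟩ ⟨h, hh, hhc⟩ hne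
    rw [abs_div_entryC_sub hgc hhc]
    gcongr
    exact hle _ (G.mul_mem (G.inv_mem hg) hh) (mt (div_entryC_eq_iff hgc hhc).2 hne)

lemma denseRange_cusps {G : Subgroup SL2R} (hdense : Dense (cuspOrbit G)) :
    DenseRange (fun g : {g // g ∈ G ∧ entryC g ≠ 0} ↦ entryA g.1 / entryC g.1) := by
  refine hdense.mono ?_
  rintro _ ⟨g, hg, hgc, rfl⟩
  exact ⟨⟨g, hg, hgc⟩, rfl⟩

lemma exists_mem_entryD_div_mem_Ico {G : Subgroup SL2R} {μ : ℝ} (hμ : 0 < μ)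
    (hμG : unipotent μ ∈ G) {g : SL2R} (hg : g ∈ G) (hc : entryC g ≠ 0) (E : ℝ) :
    ∃ g' ∈ G, entryA g' = entryA g ∧ entryC g' = entryC g ∧
      entryD g' / entryC g' ∈ Set.Ico E (E + μ) := by
  obtain ⟨k, hk, -⟩ := existsUnique_add_zsmul_mem_Ico hμ (entryD g / entryC g) E
  refine ⟨g * unipotent (k * μ), G.mul_mem hg (unipotent_intCast_mul_mem hμG k), ?_, ?_, ?_⟩
  · simp [entryA_mul]
  · simp [entryC_mul]
  · convert hk using 1
    simp only [entryC_mul, entryD_mul, entryA_unipotent, entryB_unipotent, entryC_unipotent,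
      entryD_unipotent, zsmul_eq_mul, mul_one, mul_zero, add_zero]
    field_simp
    ring

lemma exists_isBadlyApproximable_pair {G : Subgroup SL2R} {c₀ μ : ℝ} (hc₀ : 0 < c₀)
    (hle : ∀ g ∈ G, entryC g ≠ 0 → c₀ ≤ |entryC g|) (hdense : Dense (cuspOrbit G)) (hμ : 0 < μ)
    (hμG : unipotent μ ∈ G) (t R E : ℝ) {ε : ℝ} (hε : 0 < ε) :
    ∃ g ∈ G, ∃ h ∈ G, R ≤ |entryC g| ∧ R ≤ |entryC h| ∧
      IsBadlyApproximable G (c₀ / 1024)⁻¹ g ∧ IsBadlyApproximable G (c₀ / 1024)⁻¹ h ∧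
      |entryA h / entryC h - entryA g / entryC g - t| ≤ ε ∧
      entryD g / entryC g ∈ Set.Ico 0 μ ∧ entryD h / entryC h ∈ Set.Ico E (E + μ) := by
  obtain ⟨⟨g, hg, hgc⟩, ⟨h, hh, hhc⟩, hRg, hRh, hgh, hsepg, hseph⟩ :=
    (isSeparatedFamily_cusps hc₀ hle).exists_badlyApproximable_pair (denseRange_cusps hdense) t R hε
  obtain ⟨g', hg', hAg, hCg, hDg⟩ := exists_mem_entryD_div_mem_Ico hμ hμG hg hgc 0
  obtain ⟨h', hh', hAh, hCh, hDh⟩ := exists_mem_entryD_div_mem_Ico hμ hμG hh hhc E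
  have hbadg : IsBadlyApproximable G (c₀ / 1024)⁻¹ g :=
    .of_forall_div_le (by positivity) hgc fun k hk hkc hne ↦ hsepg ⟨k, hk, hkc⟩ hne
  have hbadh : IsBadlyApproximable G (c₀ / 1024)⁻¹ h :=
    .of_forall_div_le (by positivity) hhc fun k hk hkc hne ↦ hseph ⟨k, hk, hkc⟩ hne
  refine ⟨g', hg', h', hh', by rwa [hCg], by rwa [hCh], hbadg.congr hAg hCg,
    hbadh.congr hAh hCh, by rwa [hAg, hCg, hAh, hCh], ?_, hDh⟩
  rwa [zero_add] at hDg

/-! ### Infinite products of badly approximable cusps -/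

/-- The coefficient of the three-term recurrence satisfied by the products
`P`, `P * s`, `P * s * s'`. -/
def turn (s s' : SL2R) : ℝ := entryA s' / entryC s' + entryD s / entryC s

/-- The product `s 0 * s 1 * ⋯ * s (n - 1)`. -/
def prefixProd (s : ℕ → SL2R) (n : ℕ) : SL2R := ((List.range n).map s).prod

/-- A sequence of badly approximable cusps of `G` whose partial products have a growing lower left
entry: their cusps are the good approximations of a limit point. -/
structure IsAdmissible (G : Subgroup SL2R) (K M : ℝ) (s : ℕ → SL2R) : Prop where
  mem n : s n ∈ G
  isBadlyApproximable n : IsBadlyApproximable G M (s n)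
  isExpanding : IsExpanding K (fun n ↦ entryC (s n)) (fun n ↦ turn (s n) (s (n + 1)))

/-- The number `α` is the limit of the cusps of the partial products of `s`, expressed by the decay
of `α * c - a` along these products. -/
def IsLimitOfProducts (K : ℝ) (s : ℕ → SL2R) (α : ℝ) : Prop :=
  IsDichotomy K (fun n ↦ entryC (s n)) (fun n ↦ turn (s n) (s (n + 1)))
    (fun n ↦ entryC (prefixProd s n))
    (fun n ↦ α * entryC (prefixProd s n) - entryA (prefixProd s n))

section prefixProd

variable {s : ℕ → SL2R}

lemma prefixProd_zero : prefixProd s 0 = 1 := rfl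

lemma prefixProd_succ (n : ℕ) : prefixProd s (n + 1) = prefixProd s n * s n :=
  List.prod_range_succ s n

lemma prefixProd_mem {G : Subgroup SL2R} (hs : ∀ n, s n ∈ G) (n : ℕ) : prefixProd s n ∈ G := by
  induction n with
  | zero => exact G.one_mem
  | succ n ih => rw [prefixProd_succ]; exact G.mul_mem ih (hs n)

lemma prefixProd_eq_mul_inv (n : ℕ) : prefixProd s n = prefixProd s (n + 1) * (s n)⁻¹ := by
  rw [prefixProd_succ, mul_inv_cancel_right]

lemma isSolution_entryA_prefixProd (hs : ∀ n, entryC (s n) ≠ 0) :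
    IsSolution (fun n ↦ entryC (s n)) (fun n ↦ turn (s n) (s (n + 1)))
      (fun n ↦ entryA (prefixProd s n)) := by
  intro n
  have := hs n
  have := hs (n + 1)
  simp only [turn]
  rw [prefixProd_succ (n + 1), prefixProd_eq_mul_inv n, entryA_mul, entryA_mul _ (s n)⁻¹,
    entryA_inv, entryC_inv]
  field_simp
  ring

lemma isSolution_entryC_prefixProd (hs : ∀ n, entryC (s n) ≠ 0) :
    IsSolution (fun n ↦ entryC (s n)) (fun n ↦ turn (s n) (s (n + 1)))
      (fun n ↦ entryC (prefixProd s n)) := by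
  intro n
  have := hs n
  have := hs (n + 1)
  simp only [turn]
  rw [prefixProd_succ (n + 1), prefixProd_eq_mul_inv n, entryC_mul, entryC_mul _ (s n)⁻¹,
    entryA_inv, entryC_inv]
  field_simp
  ring

lemma wronskian_prefixProd (n : ℕ) :
    entryA (prefixProd s n) * entryC (prefixProd s (n + 1)) -
      entryA (prefixProd s (n + 1)) * entryC (prefixProd s n) = entryC (s n) := by
  rw [mul_comm (entryA (prefixProd s (n + 1))), ← entryC_inv_mul, prefixProd_succ,
    inv_mul_cancel_left]

end prefixProd

namespace IsAdmissible

variable {G : Subgroup SL2R} {K M α : ℝ} {s : ℕ → SL2R}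

lemma exists_isLimitOfProducts (hs : IsAdmissible G K M s) : ∃ α, IsLimitOfProducts K s α :=
  hs.isExpanding.exists_isDichotomy (isSolution_entryA_prefixProd hs.isExpanding.weight_ne_zero)
    (isSolution_entryC_prefixProd hs.isExpanding.weight_ne_zero)
    (by rw [prefixProd_zero, entryA_one]) (by rw [prefixProd_zero, entryC_one])
    wronskian_prefixProd

lemma injective_cusp_prefixProd (hs : IsAdmissible G K M s) (hα : IsLimitOfProducts K s α)
    (hG : IsDiscreteSubgroup G) (hcusp : HasCuspAtInfty G) :
    Function.Injective fun n ↦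
      entryA (prefixProd s (n + 1)) / entryC (prefixProd s (n + 1)) := by
  intro m n hmn
  have hzero := (div_entryC_eq_iff (hα.growing_succ_ne_zero m) (hα.growing_succ_ne_zero n)).1 hmn
  exact hα.strictMono_abs_growing_succ.injective
    (hG.abs_entryC_eq hcusp (prefixProd_mem hs.mem _) (prefixProd_mem hs.mem _) hzero).symm

lemma one_le_sixteen_mul_cuspError (hs : IsAdmissible G K M s) (hα : IsLimitOfProducts K s α)
    (hM : 0 ≤ M) {c₀ : ℝ} (hc₀ : 0 < c₀) (hle : ∀ g ∈ G, entryC g ≠ 0 → c₀ ≤ |entryC g|)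
    {g : SL2R} (hg : g ∈ G) (hne : ∀ n, entryC ((prefixProd s n)⁻¹ * g) ≠ 0) :
    1 ≤ 16 * M * cuspError α g := by
  have hmem (n : ℕ) : (prefixProd s n)⁻¹ * g ∈ G :=
    G.mul_mem (G.inv_mem (prefixProd_mem hs.mem n)) hg
  have hdecomp (n : ℕ) : entryC ((prefixProd s n)⁻¹ * g) =
      -entryC g * (α * entryC (prefixProd s n) - entryA (prefixProd s n)) +
        (α * entryC g - entryA g) * entryC (prefixProd s n) := by
    rw [entryC_inv_mul]
    ring
  have hbad (n : ℕ) : |entryC (s n)| ≤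
      M * |entryC ((prefixProd s n)⁻¹ * g)| * |entryC ((prefixProd s (n + 1))⁻¹ * g)| := by
    have hsucc : (prefixProd s (n + 1))⁻¹ * g = (s n)⁻¹ * ((prefixProd s n)⁻¹ * g) := by
      rw [prefixProd_succ, mul_inv_rev, mul_assoc]
    have hne' := hne (n + 1)
    rw [hsucc] at hne' ⊢
    exact hs.isBadlyApproximable n _ (hmem n) (hne n) hne'
  have := hα.one_le_sixteen_mul hM hc₀ hdecomp (fun n ↦ hle _ (hmem n) (hne n)) hbad
  rwa [abs_neg, mul_assoc] at this

/-- Every cusp which is not the cusp of a partial product of `s` approximates the limit badly. -/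
lemma mem_lagrangeSet_iff_infinite (hs : IsAdmissible G K M s) (hα : IsLimitOfProducts K s α)
    (hG : IsDiscreteSubgroup G) (hcusp : HasCuspAtInfty G) (hM : 0 < M) {k : ℝ}
    (hk : 16 * M ≤ k) :
    k ∈ LagrangeSet G α ↔ {n | k < (cuspError α (prefixProd s (n + 1)))⁻¹}.Infinite := by
  have hkpos : 0 < k := by linarith
  have hpos (n : ℕ) : 0 < cuspError α (prefixProd s (n + 1)) :=
    mul_pos (abs_pos.2 (hα.growing_succ_ne_zero n)) (abs_pos.2 (hα.decaying_ne_zero (n + 1)))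
  rw [mem_lagrangeSet_iff, and_iff_right hkpos,
    ← Set.infinite_image_iff (hs.injective_cusp_prefixProd hα hG hcusp).injOn]
  refine iff_of_eq (congrArg Set.Infinite ?_)
  ext v
  constructor
  · rintro ⟨g, hg, hgc, rfl, hlt⟩
    obtain ⟨n, hn⟩ : ∃ n, entryC ((prefixProd s n)⁻¹ * g) = 0 := by
      by_contra! hne
      obtain ⟨c₀, hc₀, hle⟩ := hG.exists_le_abs_entryC hcusp
      have := hs.one_le_sixteen_mul_cuspError hα hM.le hc₀ hle hg hne
      have := mul_le_mul_of_nonneg_right hk (by unfold cuspError; positivity : 0 ≤ cuspError α g)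
      linarith
    obtain _ | n := n
    · rw [prefixProd_zero, inv_one, one_mul] at hn
      exact absurd hn hgc
    · refine ⟨n, ?_, (div_entryC_eq_iff (hα.growing_succ_ne_zero n) hgc).2 hn⟩
      rwa [Set.mem_ofPred_eq, lt_inv_comm₀ hkpos (hpos n), ← one_div, lt_div_iff₀' hkpos,
        ← hG.cuspError_eq hcusp (prefixProd_mem hs.mem _) hg hn]
  · rintro ⟨n, hn, rfl⟩
    refine ⟨_, prefixProd_mem hs.mem (n + 1), hα.growing_succ_ne_zero n, rfl, ?_⟩
    rwa [Set.mem_ofPred_eq, lt_inv_comm₀ hkpos (hpos n), ← one_div, lt_div_iff₀' hkpos] at hn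

end IsAdmissible

lemma exists_interleaving {X : Type*} (f g : ℕ → X) :
    ∃ s : ℕ → X, (∀ i, s (2 * i) = f i) ∧ ∀ i, s (2 * i + 1) = g i :=
  ⟨fun n ↦ if Even n then f (n / 2) else g (n / 2), fun i ↦ by simp, fun i ↦ by
    simp [Nat.add_div]⟩

lemma turn_inv_left (g h : SL2R) :
    turn g⁻¹ h = entryA h / entryC h - entryA g / entryC g := by
  rw [turn, entryD_inv, entryC_inv, div_neg, sub_eq_add_neg]

lemma turn_inv_right (g h : SL2R) :
    turn h g⁻¹ = entryD h / entryC h - entryD g / entryC g := by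
  rw [turn, entryA_inv, entryC_inv, div_neg, sub_eq_add_neg, add_comm]

lemma exists_seq_turn {G : Subgroup SL2R} {c₀ μ : ℝ} (hc₀ : 0 < c₀)
    (hle : ∀ g ∈ G, entryC g ≠ 0 → c₀ ≤ |entryC g|) (hdense : Dense (cuspOrbit G)) (hμ : 0 < μ)
    (hμG : unipotent μ ∈ G) (D : ℝ) (t : ℕ → ℝ) :
    ∃ s : ℕ → SL2R,
      (∀ n, s n ∈ G ∧ IsBadlyApproximable G (c₀ / 1024)⁻¹ (s n) ∧
        ((n : ℝ) + 1) / 2 ≤ |entryC (s n)|) ∧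
      (∀ i : ℕ, |turn (s (2 * i)) (s (2 * i + 1)) - t i| ≤ 1 / ((i : ℝ) + 1)) ∧
      ∀ i, turn (s (2 * i + 1)) (s (2 * i + 2)) ∈ Set.Icc D (D + 2 * μ) := by
  have hpair (i : ℕ) := exists_isBadlyApproximable_pair hc₀ hle hdense hμ hμG (t i) (i + 1)
    (D + μ) (Nat.one_div_pos_of_nat (α := ℝ) (n := i))
  choose g hg h hh hCg hCh hbadg hbadh hgh hDg hDh using hpair
  obtain ⟨s, heven, hodd⟩ := exists_interleaving (fun i ↦ (g i)⁻¹) h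
  refine ⟨s, fun n ↦ ?_, fun i ↦ ?_, fun i ↦ ?_⟩
  · obtain ⟨i, rfl | rfl⟩ := n.even_or_odd'
    · rw [heven, entryC_inv, abs_neg]
      refine ⟨G.inv_mem (hg i), (hbadg i).inv (hg i), ?_⟩
      push_cast
      linarith [hCg i]
    · rw [hodd]
      refine ⟨hh i, hbadh i, ?_⟩
      push_cast
      linarith [hCh i]
  · rw [heven, hodd, turn_inv_left]
    exact hgh i
  · rw [show 2 * i + 2 = 2 * (i + 1) by ring, heven, hodd, turn_inv_right]
    constructor <;> linarith [(hDg (i + 1)).1, (hDg (i + 1)).2, (hDh i).1, (hDh i).2]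

lemma exists_isAdmissible {G : Subgroup SL2R} (hG : IsDiscreteSubgroup G)
    (hcusp : HasCuspAtInfty G) (hdense : Dense (cuspOrbit G)) :
    ∃ K M B : ℝ, 0 < M ∧ ∀ t : ℕ → ℝ, (∀ i, B ≤ t i) → ∃ s : ℕ → SL2R,
      IsAdmissible G K M s ∧
      Filter.Tendsto (fun n ↦ |entryC (s n)|) Filter.atTop Filter.atTop ∧
      Filter.Tendsto (fun i ↦ |turn (s (2 * i)) (s (2 * i + 1))| - t i) Filter.atTop (nhds 0) ∧
      ∀ i, |turn (s (2 * i + 1)) (s (2 * i + 2))| ≤ B := by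
  obtain ⟨c₀, hc₀, hle⟩ := hG.exists_le_abs_entryC hcusp
  obtain ⟨μ, hμ, hμG⟩ := hcusp.exists_unipotent_mem
  obtain ⟨K, hK⟩ := exists_forall_isExpanding hc₀
  set D := max (K + 1) 0
  refine ⟨K, (c₀ / 1024)⁻¹, D + 2 * μ + 1, by positivity, fun t ht ↦ ?_⟩
  obtain ⟨s, hs, heven, hodd⟩ := exists_seq_turn hc₀ hle hdense hμ hμG D t
  have hDeven (i : ℕ) : D ≤ turn (s (2 * i)) (s (2 * i + 1)) := by
    have : 1 / ((i : ℝ) + 1) ≤ 1 := div_le_one_of_le₀ (by simp) (by positivity)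
    linarith [(abs_le.1 (heven i)).1, ht i]
  have hDturn (n : ℕ) : D ≤ turn (s n) (s (n + 1)) := by
    obtain ⟨i, rfl | rfl⟩ := n.even_or_odd'
    exacts [hDeven i, (hodd i).1]
  have abs_turn (n : ℕ) : |turn (s n) (s (n + 1))| = turn (s n) (s (n + 1)) :=
    abs_of_nonneg ((le_max_right _ _).trans (hDturn n))
  have hpos (n : ℕ) : 0 < |entryC (s n)| := lt_of_lt_of_le (by positivity) (hs n).2.2
  refine ⟨s, ⟨fun n ↦ (hs n).1, fun n ↦ (hs n).2.1, hK _ _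
    (fun n ↦ hle _ (hs n).1 (abs_pos.1 (hpos n)))
    fun n ↦ by rw [abs_turn]; exact (le_max_left _ _).trans (hDturn n)⟩, ?_, ?_, fun i ↦ ?_⟩
  · refine Filter.tendsto_atTop_mono (fun n ↦ (hs n).2.2) ?_
    exact (Filter.tendsto_atTop_add_const_right _ _ tendsto_natCast_atTop_atTop).atTop_div_const
      two_pos
  · simp only [abs_turn]
    exact squeeze_zero_norm heven tendsto_one_div_add_atTop_nhds_zero_nat
  · rw [abs_turn]
    linarith [(hodd i).2]

/-! ### Prescribing the Lagrange value -/

lemma IsLimitOfProducts.tendsto_inv_cuspError_sub {K α : ℝ} {s : ℕ → SL2R}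
    (hα : IsLimitOfProducts K s α)
    (hs : Filter.Tendsto (fun n ↦ |entryC (s n)|) Filter.atTop Filter.atTop) :
    Filter.Tendsto (fun n ↦ (cuspError α (prefixProd s (n + 1)))⁻¹ - |turn (s n) (s (n + 1))|)
      Filter.atTop (nhds 0) := by
  have hsq : Filter.Tendsto (fun n ↦ 1 / entryC (s n) ^ 2) Filter.atTop (nhds 0) := by
    simp_rw [← sq_abs (entryC _)]
    exact ((Filter.tendsto_pow_atTop two_ne_zero).comp hs).const_div_atTop 1
  refine squeeze_zero_norm hα.abs_inv_sub_abs_le ?_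
  simpa using (hsq.add (hsq.comp (Filter.tendsto_add_atTop_nat 1))).div_const K

lemma IsLimitOfProducts.inv_cuspError_le {K α : ℝ} {s : ℕ → SL2R}
    (hα : IsLimitOfProducts K s α) (n : ℕ) :
    (cuspError α (prefixProd s (n + 1)))⁻¹ ≤ |turn (s n) (s (n + 1))| + 2 := by
  have := (abs_le.1 (hα.abs_inv_sub_abs_le n)).2.trans (hα.inv_sq_add_inv_sq_div_le_two n)
  rw [cuspError]
  linarith

lemma tendsto_two_mul_atTop : Filter.Tendsto (fun i : ℕ ↦ 2 * i) Filter.atTop Filter.atTop :=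
  Filter.tendsto_id.const_mul_atTop' two_pos

lemma exists_approximation_profile {G : Subgroup SL2R} (hG : IsDiscreteSubgroup G)
    (hcusp : HasCuspAtInfty G) (hdense : Dense (cuspOrbit G)) :
    ∃ T : ℝ, ∀ t : ℕ → ℝ, (∀ i, T ≤ t i) → ∃ (α : ℝ) (W : ℕ → ℝ),
      Filter.Tendsto (fun i ↦ W (2 * i) - t i) Filter.atTop (nhds 0) ∧
      (∀ i, W (2 * i + 1) ≤ T) ∧
      ∀ k, T ≤ k → (k ∈ LagrangeSet G α ↔ {n | k < W n}.Infinite) := by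
  obtain ⟨K, M, B, hM, hB⟩ := exists_isAdmissible hG hcusp hdense
  refine ⟨max (B + 2) (16 * M), fun t ht ↦ ?_⟩
  obtain ⟨s, hs, hlarge, heven, hodd⟩ :=
    hB t fun i ↦ by linarith [ht i, le_max_left (B + 2) (16 * M)]
  obtain ⟨α, hα⟩ := hs.exists_isLimitOfProducts
  refine ⟨α, fun n ↦ (cuspError α (prefixProd s (n + 1)))⁻¹, ?_, fun i ↦ ?_, fun k hk ↦
    hs.mem_lagrangeSet_iff_infinite hα hG hcusp hM ((le_max_right _ _).trans hk)⟩
  · simpa using ((hα.tendsto_inv_cuspError_sub hlarge).comp tendsto_two_mul_atTop).add heven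
  · exact (hα.inv_cuspError_le (2 * i + 1)).trans
      ((add_le_add_left (hodd i) 2).trans (le_max_left _ _))

lemma lagrangeValue_eq_of_tendsto {G : Subgroup SL2R} {α T : ℝ} {W : ℕ → ℝ} {L : ℝ≥0∞}
    (hmem : ∀ k, T ≤ k → (k ∈ LagrangeSet G α ↔ {n | k < W n}.Infinite))
    (heven : Filter.Tendsto (fun i ↦ ENNReal.ofReal (W (2 * i))) Filter.atTop (nhds L))
    (hodd : ∀ i, W (2 * i + 1) ≤ T) (hL : ENNReal.ofReal T < L) : LagrangeValue G α = L := by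
  refine le_antisymm (sSup_le ?_) (le_of_forall_lt fun b hb ↦ ?_)
  · rintro _ ⟨k, hk, rfl⟩
    by_contra! hLk
    have hTk : T ≤ k := (ENNReal.ofReal_lt_ofReal_iff'.1 (hL.trans hLk)).1.le
    refine (hmem k hTk).1 hk ?_
    obtain ⟨N, hN⟩ := Filter.eventually_atTop.1 (heven.eventually_lt_const hLk)
    refine (Set.finite_lt_nat (2 * N)).subset fun n hn ↦ ?_
    by_contra hge
    obtain ⟨i, rfl | rfl⟩ := n.even_or_odd'
    · exact (ENNReal.ofReal_lt_ofReal_iff'.1 (hN i (by simpa using hge))).1.not_gt hn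
    · exact ((hodd i).trans hTk).not_gt hn
  · obtain ⟨k, -, hbk, hkL⟩ := ENNReal.lt_iff_exists_real_btwn.1 (max_lt hb hL)
    have hTk : T ≤ k :=
      (ENNReal.ofReal_lt_ofReal_iff'.1 ((le_max_right _ _).trans_lt hbk)).1.le
    have hk : k ∈ LagrangeSet G α := by
      rw [hmem k hTk, ← Nat.frequently_atTop_iff_infinite]
      exact tendsto_two_mul_atTop.frequently <|
        (heven.eventually_const_lt hkL).frequently.mono fun i hi ↦
          (ENNReal.ofReal_lt_ofReal_iff'.1 hi).1
    exact ((le_max_left _ _).trans_lt hbk).trans_le (le_sSup (Set.mem_image_of_mem _ hk))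

lemma exists_seq_forall_tendsto_ofReal {a : ℝ} {L : ℝ≥0∞} (hL : ENNReal.ofReal a ≤ L) :
    ∃ t : ℕ → ℝ, (∀ i, a ≤ t i) ∧ ∀ u : ℕ → ℝ,
      Filter.Tendsto (fun i ↦ u i - t i) Filter.atTop (nhds 0) →
      Filter.Tendsto (fun i ↦ ENNReal.ofReal (u i)) Filter.atTop (nhds L) := by
  rcases eq_or_ne L ⊤ with rfl | hLtop
  · refine ⟨fun i ↦ i + a, fun i ↦ by simp, fun u hu ↦ ?_⟩
    have ht : Filter.Tendsto (fun i : ℕ ↦ (i : ℝ) + a) Filter.atTop Filter.atTop :=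
      Filter.tendsto_atTop_add_const_right _ _ tendsto_natCast_atTop_atTop
    refine ENNReal.tendsto_ofReal_nhds_top.2 ?_
    simpa using hu.add_atTop ht
  · refine ⟨fun _ ↦ L.toReal, fun _ ↦ (ENNReal.ofReal_le_iff_le_toReal hLtop).1 hL, fun u hu ↦ ?_⟩
    rw [← ENNReal.ofReal_toReal hLtop]
    refine ENNReal.tendsto_ofReal ?_
    simpa using hu.add_const L.toReal

theorem hall_ray_for_fuchsian_groups_general (G : Subgroup SL2R)
    (hG : IsDiscreteSubgroup G) (hcusp : HasCuspAtInfty G) (hdense : Dense (cuspOrbit G)) :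
    ∃ L₀ : ℝ,
      (∀ L : ℝ≥0∞, ENNReal.ofReal L₀ ≤ L → L ∈ LagrangeSpectrum G) ∧
      (∀ L : ℝ, L₀ ≤ L → ∃ α : ℝ, LagrangeValue G α = ENNReal.ofReal L) := by
  obtain ⟨T, hT⟩ := exists_approximation_profile hG hcusp hdense
  have ray (L : ℝ≥0∞) (hL : ENNReal.ofReal (max T 0 + 1) ≤ L) : L ∈ LagrangeSpectrum G := by
    have hTL : ENNReal.ofReal T < L := lt_of_lt_of_le
      ((ENNReal.ofReal_lt_ofReal_iff (by positivity)).2 (by linarith [le_max_left T 0])) hL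
    obtain ⟨t, hTt, ht⟩ := exists_seq_forall_tendsto_ofReal hTL.le
    obtain ⟨α, W, heven, hodd, hmem⟩ := hT t hTt
    exact ⟨α, lagrangeValue_eq_of_tendsto hmem (ht _ heven) hodd hTL⟩
  exact ⟨max T 0 + 1, ray, fun L hL ↦ ray _ (ENNReal.ofReal_le_ofReal hL)⟩

/-- **Hall ray for Fuchsian groups.** If `G ≤ SL(2,ℝ)` is a non-uniform lattice and `∞`
is a cusp of `G`, then the Lagrange spectrum `𝓛(G,∞)` contains a Hall ray: there is
`L₀ ∈ ℝ` such that every extended real `L` with `L₀ ≤ L ≤ +∞` belongs to `𝓛(G,∞)`;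
in particular every real `L ≥ L₀` is the Lagrange value of some `α ∈ ℝ`. -/
theorem hall_ray_for_fuchsian_groups (G : Subgroup SL2R)
    (hG : IsNonUniformLattice G) (hcusp : HasCuspAtInfty G) :
    ∃ L₀ : ℝ,
      (∀ L : ℝ≥0∞, ENNReal.ofReal L₀ ≤ L → L ∈ LagrangeSpectrum G) ∧
      (∀ L : ℝ, L₀ ≤ L → ∃ α : ℝ, LagrangeValue G α = ENNReal.ofReal L) :=
  hall_ray_for_fuchsian_groups_general G hG.1 hcusp (hG.dense_cuspOrbit hcusp)
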